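/- arXiv:0911.0610 — 3 statements merged into one kernel-verified Lean document; each statement's English description precedes it below -/
import Mathlib

section
/- (Multiparameter stochastic ergodic theorem, discrete case.) Let (S, 𝓑, μ) be a standard Borel space with a σ-finite measure μ, let {φ_t}_{t∈ℤ^d} be a nonsingular ℤ^d-action on (S,μ), and for t ∈ ℤ^d let w(t,·) be a measurable version of the Radon–Nikodym derivative of the measure A ↦ μ(φ_t(A)) with respect to μ. Let f₀ ∈ L¹(S,μ) and set f(t,s) := w(t,s) f₀(φ_t(s)). Then there exists f̃ ∈ L¹(S,μ) such that the averages A_T f := (2T)^{-d} Σ_{t ∈ (−T,T]^d ∩ ℤ^d} f(t,·) converge to f̃ locally in measure as T → ∞, and f̃ is invariant: for every t ∈ ℤ^d, w(t,s) f̃(φ_t(s)) = f̃(s) for μ-a.e. s. -/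
open MeasureTheory Filter

namespace SET

noncomputable def box (d T : ℕ) : Finset (Fin d → ℤ) :=
  Fintype.piFinset fun _ : Fin d => Finset.Ioc (-(T : ℤ)) (T : ℤ)

lemma card_box (d T : ℕ) : ((box d T).card : ℝ) = (2 * T : ℝ) ^ d := by
  simp only [box, Fintype.card_piFinset, Int.card_Ioc, Finset.prod_const, Finset.card_univ,
    Fintype.card_fin]
  push_cast
  congr 1
  have : ((T : ℤ) - -(T : ℤ)).toNat = 2 * T := by omega
  rw [this]; push_cast; ring

section abstract
variable {d : ℕ} {E : Type*} [NormedAddCommGroup E] [NormedSpace ℝ E]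

noncomputable def avg (V : (Fin d → ℤ) → E →ₗᵢ[ℝ] E) (T : ℕ) : E →ₗ[ℝ] E :=
  ((2 * T : ℝ) ^ d)⁻¹ • ∑ t ∈ box d T, (V t).toLinearMap

lemma avg_apply (V : (Fin d → ℤ) → E →ₗᵢ[ℝ] E) (T : ℕ) (x : E) :
    avg V T x = ((2 * T : ℝ) ^ d)⁻¹ • ∑ t ∈ box d T, V t x := by
  simp [avg, LinearMap.sum_apply]

lemma norm_avg_le (V : (Fin d → ℤ) → E →ₗᵢ[ℝ] E) (T : ℕ) (x : E) :
    ‖avg V T x‖ ≤ ‖x‖ := by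
  rw [avg_apply, norm_smul]
  have h1 : ‖∑ t ∈ box d T, V t x‖ ≤ (2 * T : ℝ) ^ d * ‖x‖ := by
    refine (norm_sum_le _ _).trans ?_
    simp [card_box]
  have h0 : (0:ℝ) ≤ (2 * T : ℝ) ^ d := by positivity
  rw [Real.norm_of_nonneg (inv_nonneg.2 h0)]
  calc _ ≤ ((2 * T : ℝ) ^ d)⁻¹ * ((2 * T : ℝ) ^ d * ‖x‖) := by gcongr
    _ = (((2 * T : ℝ) ^ d)⁻¹ * (2 * T : ℝ) ^ d) * ‖x‖ := by ring
    _ ≤ 1 * ‖x‖ := by gcongr; exact inv_mul_le_one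
    _ = _ := one_mul _

lemma avg_inv (V : (Fin d → ℤ) → E →ₗᵢ[ℝ] E) (T : ℕ) (hT : 1 ≤ T) (x : E)
    (hx : ∀ t, V t x = x) : avg V T x = x := by
  rw [avg_apply]
  have : (2 * T : ℝ) ^ d ≠ 0 := by positivity
  simp only [hx, Finset.sum_const, ← Nat.cast_smul_eq_nsmul ℝ, card_box, smul_smul,
    inv_mul_cancel₀ this, one_smul]

noncomputable def shift (u : Fin d → ℤ) (T : ℕ) : Finset (Fin d → ℤ) :=
  (box d T).map (addRightEmbedding u)

lemma card_inter (u : Fin d → ℤ) (T : ℕ) (hT : ∀ i, |u i| ≤ 2 * T) :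
    ((box d T ∩ shift u T).card : ℝ) = ∏ i, (2 * T - |u i| : ℝ) := by
  have : box d T ∩ shift u T = Fintype.piFinset fun i : Fin d =>
      Finset.Ioc (max (-(T:ℤ)) (-T + u i)) (min (T:ℤ) (T + u i)) := by
    ext t
    simp only [box, shift, Finset.mem_inter, Fintype.mem_piFinset, Finset.mem_map,
      addRightEmbedding_apply, Finset.mem_Ioc]
    constructor
    · rintro ⟨h, a, ha, rfl⟩ i
      have := h i; have := ha i
      simp only [Pi.add_apply] at *
      omega
    · intro h
      refine ⟨fun i => by have := h i; omega, t - u, fun i => ?_, by simp⟩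
      have := h i
      simp only [Pi.sub_apply]; omega
  rw [this, Fintype.card_piFinset]
  push_cast
  refine Finset.prod_congr rfl fun i _ => ?_
  have h := hT i
  rw [Int.card_Ioc]
  have h2 : (((min (T:ℤ) (T + u i) - max (-(T:ℤ)) (-T + u i)).toNat : ℕ) : ℤ) = 2 * T - |u i| := by
    rcases abs_cases (u i) with h' | h' <;> omega
  have := congrArg (fun z : ℤ => (z:ℝ)) h2
  push_cast at this
  simpa using this

lemma ratio_tendsto (u : Fin d → ℤ) :
    Tendsto (fun T : ℕ => ((2 * T : ℝ) ^ d)⁻¹ * ((box d T ∩ shift u T).card : ℝ)) atTop (nhds 1) := by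
  have h1 : Tendsto (fun T : ℕ => ∏ i : Fin d, (1 - (|u i| : ℝ) / (2 * T))) atTop
      (nhds (∏ i : Fin d, (1:ℝ))) := by
    refine tendsto_finsetProd _ fun i _ => ?_
    have : Tendsto (fun T : ℕ => (|u i| : ℝ) / (2 * T)) atTop (nhds 0) :=
      Tendsto.div_atTop tendsto_const_nhds
        (Tendsto.const_mul_atTop (by norm_num) tendsto_natCast_atTop_atTop)
    simpa using tendsto_const_nhds.sub this
  simp only [Finset.prod_const_one] at h1
  refine h1.congr' ?_
  have : ∀ᶠ T : ℕ in atTop, ∀ i, |u i| ≤ 2 * (T:ℤ) := by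
    rw [eventually_all]
    intro i
    filter_upwards [eventually_ge_atTop (u i).natAbs] with T hT
    rw [Int.abs_eq_natAbs]
    omega
  filter_upwards [this, eventually_ge_atTop 1] with T hT hT1
  rw [card_inter u T hT]
  have h2 : (2 * T : ℝ) ≠ 0 := by positivity
  have : (2 * T : ℝ) ^ d = ∏ i : Fin d, (2 * T : ℝ) := by simp
  rw [this, ← Finset.prod_inv_distrib, ← Finset.prod_mul_distrib]
  refine Finset.prod_congr rfl fun i _ => ?_
  push_cast
  field_simp

lemma folner (V : (Fin d → ℤ) → E →ₗᵢ[ℝ] E) (hV : ∀ u v x, V (u + v) x = V u (V v x))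
    (u : Fin d → ℤ) (x : E) :
    Tendsto (fun T => avg V T (V u x - x)) atTop (nhds 0) := by
  have hb : ∀ T : ℕ, 1 ≤ T → ‖avg V T (V u x - x)‖ ≤
      2 * (1 - ((2 * T : ℝ) ^ d)⁻¹ * ((box d T ∩ shift u T).card : ℝ)) * ‖x‖ := by
    intro T hT
    have h0 : (0:ℝ) < (2 * T : ℝ) ^ d := by positivity
    have e1 : ∑ t ∈ box d T, V t (V u x - x) =
        ∑ t ∈ shift u T \ box d T, V t x - ∑ t ∈ box d T \ shift u T, V t x := by
      rw [Finset.sum_sdiff_sub_sum_sdiff]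
      simp [shift, hV, Finset.sum_sub_distrib]
    have c1 : ((shift u T \ box d T).card : ℝ) = (2 * T : ℝ) ^ d - (box d T ∩ shift u T).card := by
      have := Finset.card_sdiff_add_card_inter (shift u T) (box d T)
      have h3 : (shift u T).card = (box d T).card := by simp [shift]
      rw [h3, Finset.inter_comm] at this
      rw [← card_box, ← this]; push_cast; ring
    have c2 : ((box d T \ shift u T).card : ℝ) = (2 * T : ℝ) ^ d - (box d T ∩ shift u T).card := by
      have := Finset.card_sdiff_add_card_inter (box d T) (shift u T)
      rw [← card_box, ← this]; push_cast; ring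
    have b : ∀ F : Finset (Fin d → ℤ), ‖∑ t ∈ F, V t x‖ ≤ F.card * ‖x‖ := fun F => by
      refine (norm_sum_le _ _).trans ?_
      simp
    rw [avg_apply, norm_smul, e1, Real.norm_of_nonneg (inv_nonneg.2 h0.le)]
    calc _ ≤ ((2 * T : ℝ) ^ d)⁻¹ * (((2 * T : ℝ) ^ d - (box d T ∩ shift u T).card) * ‖x‖ +
          ((2 * T : ℝ) ^ d - (box d T ∩ shift u T).card) * ‖x‖) := by
            gcongr
            refine (norm_sub_le _ _).trans (add_le_add ?_ ?_)
            · rw [← c1]; exact b _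
            · rw [← c2]; exact b _
      _ = _ := by field_simp; ring
  have h := (((tendsto_const_nhds (x := (1:ℝ))).sub (ratio_tendsto u)).const_mul 2).mul_const ‖x‖
  simp only [sub_self, mul_zero, zero_mul] at h
  refine squeeze_zero_norm' ?_ h
  filter_upwards [eventually_ge_atTop 1] with T hT using hb T hT

lemma comm_avg (V : (Fin d → ℤ) → E →ₗᵢ[ℝ] E) (hV : ∀ u v x, V (u + v) x = V u (V v x))
    (u : Fin d → ℤ) (T : ℕ) (x : E) : V u (avg V T x) = avg V T (V u x) := by
  simp only [avg_apply, map_smul, map_sum, ← hV, add_comm u]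

lemma closed_conv [CompleteSpace E] (V : (Fin d → ℤ) → E →ₗᵢ[ℝ] E) (x : E)
    (h : ∀ ε > 0, ∃ y, ‖x - y‖ < ε ∧ ∃ z, Tendsto (fun T => avg V T y) atTop (nhds z)) :
    ∃ z, Tendsto (fun T => avg V T x) atTop (nhds z) := by
  apply cauchySeq_tendsto_of_complete
  rw [Metric.cauchySeq_iff]
  intro ε hε
  obtain ⟨y, hy, z, hz⟩ := h (ε/3) (by positivity)
  obtain ⟨N, hN⟩ := Metric.cauchySeq_iff.1 hz.cauchySeq (ε/3) (by positivity)
  refine ⟨N, fun m hm n hn => ?_⟩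
  have h1 := hN m hm n hn
  rw [dist_eq_norm] at *
  have e : avg V m x - avg V n x = avg V m (x - y) + (avg V m y - avg V n y) - avg V n (x-y) := by
    simp only [map_sub]; abel
  rw [e]
  have := norm_avg_le V m (x-y)
  have := norm_avg_le V n (x-y)
  have := norm_sub_le (avg V m (x - y) + (avg V m y - avg V n y)) (avg V n (x-y))
  have := norm_add_le (avg V m (x - y)) (avg V m y - avg V n y)
  linarith

lemma lim_inv (V : (Fin d → ℤ) → E →ₗᵢ[ℝ] E) (hV : ∀ u v x, V (u + v) x = V u (V v x))
    (x z : E) (h : Tendsto (fun T => avg V T x) atTop (nhds z)) (u) : V u z = z := by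
  have h1 : Tendsto (fun T => V u (avg V T x)) atTop (nhds (V u z)) :=
    ((V u).continuous.tendsto z).comp h
  have h2 := h1.sub h
  have h3 := folner V hV u x
  simp only [map_sub] at h3
  simp only [comm_avg V hV] at h2
  exact sub_eq_zero.1 (tendsto_nhds_unique h2 h3)

end abstract

section hilbert
variable {d : ℕ} {H : Type*} [NormedAddCommGroup H] [InnerProductSpace ℝ H] [CompleteSpace H]

/-- decomposition -/
lemma decomp (V : (Fin d → ℤ) → H →ₗᵢ[ℝ] H) (x : H) :
    ∃ a b, x = a + b ∧ (∀ t, V t b = b) ∧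
      a ∈ closure (Submodule.span ℝ {z | ∃ u y, z = V u y - y} : Set H) := by
  set D := Submodule.span ℝ {z | ∃ u y, z = V u y - y} with hD
  set K := D.topologicalClosure with hK
  have hKc : IsClosed (K : Set H) := D.isClosed_topologicalClosure
  have : CompleteSpace K := hKc.completeSpace_coe
  refine ⟨K.starProjection x, x - K.starProjection x, by abel, fun t => ?_, ?_⟩
  · have hb := K.sub_starProjection_mem_orthogonal x
    set b := x - K.starProjection x
    have h1 : inner ℝ (V t b - b) b = 0 :=
      hb _ (D.le_topologicalClosure (Submodule.subset_span ⟨t, b, rfl⟩))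
    have h2 : ‖V t b - b‖ ^ 2 = 0 := by
      rw [norm_sub_sq_real, (V t).norm_map]
      rw [inner_sub_left, real_inner_self_eq_norm_sq] at h1
      linarith
    exact sub_eq_zero.1 (norm_eq_zero.1 (pow_eq_zero_iff two_ne_zero |>.1 h2))
  · rw [← Submodule.topologicalClosure_coe]
    exact K.starProjection_apply_mem x

/-- asymptotically invariant bounded sequences are asymptotically orthogonal to coboundaries -/
lemma asym (V : (Fin d → ℤ) → H →ₗᵢ[ℝ] H) (hV : ∀ u v x, V (u + v) x = V u (V v x))
    (h0 : ∀ x, V 0 x = x)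
    (g : ℕ → H) (C : ℝ) (hC : ∀ T, ‖g T‖ ≤ C)
    (hg : ∀ u, Tendsto (fun T => V u (g T) - g T) atTop (nhds 0))
    (a : H) (ha : a ∈ closure (Submodule.span ℝ {z | ∃ u y, z = V u y - y} : Set H)) :
    Tendsto (fun T => inner ℝ (g T) a) atTop (nhds 0) := by
  have hs : ∀ a ∈ Submodule.span ℝ {z | ∃ u y, z = V u y - y},
      Tendsto (fun T => inner ℝ (g T) a) atTop (nhds 0) := by
    intro a ha
    induction ha using Submodule.span_induction with
    | mem z hz =>
      obtain ⟨u, y, rfl⟩ := hz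
      have : ∀ T, inner ℝ (g T) (V u y - y) = inner ℝ (V (-u) (g T) - g T) y := fun T => by
        rw [inner_sub_left, inner_sub_right, ← (V (-u)).inner_map_map (g T) (V u y), ← hV]
        simp [h0]
      simp only [this]
      simpa using (hg (-u)).inner (tendsto_const_nhds (x := y))
    | zero => simp
    | add x y _ _ hx hy => simpa [inner_add_right] using hx.add hy
    | smul c x _ hx => simpa [inner_smul_right] using hx.const_mul c
  rw [Metric.tendsto_atTop]
  intro ε hε
  have hC0 : 0 ≤ C := (norm_nonneg _).trans (hC 0)
  obtain ⟨b, hb, hab⟩ := Metric.mem_closure_iff.1 ha (ε / (2 * (C + 1))) (by positivity)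
  obtain ⟨N, hN⟩ := Metric.tendsto_atTop.1 (hs b hb) (ε/2) (by positivity)
  refine ⟨N, fun n hn => ?_⟩
  have h1 := hN n hn
  simp only [dist_zero_right] at *
  have e : inner ℝ (g n) a = inner ℝ (g n) b + inner ℝ (g n) (a - b) := by
    rw [inner_sub_right]; ring
  have h2 : ‖inner ℝ (g n) (a - b)‖ ≤ (C+1) * (ε / (2 * (C + 1))) := by
    refine (norm_inner_le_norm _ _).trans ?_
    rw [dist_eq_norm] at hab
    have := hC n
    gcongr
    linarith
  have h3 : (C+1) * (ε / (2 * (C + 1))) = ε / 2 := by field_simp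
  rw [e]
  have := norm_add_le (inner ℝ (g n) b) (inner ℝ (g n) (a - b))
  linarith

lemma mean_ergodic (V : (Fin d → ℤ) → H →ₗᵢ[ℝ] H) (hV : ∀ u v x, V (u + v) x = V u (V v x))
    (x : H) : ∃ y, (∀ t, V t y = y) ∧ Tendsto (fun T => avg V T x) atTop (nhds y) ∧
      ∀ z, (∀ t, V t z = z) → inner ℝ z x = inner ℝ z y := by
  obtain ⟨a, b, rfl, hb, ha⟩ := decomp V x
  have hs : ∀ a ∈ Submodule.span ℝ {z | ∃ u y, z = V u y - y},
      Tendsto (fun T => avg V T a) atTop (nhds 0) := by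
    intro a ha
    induction ha using Submodule.span_induction with
    | mem z hz =>
      obtain ⟨u, y, rfl⟩ := hz
      exact folner V hV u y
    | zero => simp
    | add x y _ _ hx hy => simpa using hx.add hy
    | smul c x _ hx => simpa using hx.const_smul c
  have h1 : Tendsto (fun T => avg V T a) atTop (nhds 0) := by
    rw [Metric.tendsto_atTop]
    intro ε hε
    obtain ⟨b, hb, hab⟩ := Metric.mem_closure_iff.1 ha (ε / 2) (by positivity)
    obtain ⟨N, hN⟩ := Metric.tendsto_atTop.1 (hs b hb) (ε/2) (by positivity)
    refine ⟨N, fun n hn => ?_⟩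
    have h1 := hN n hn
    simp only [dist_zero_right] at *
    have e : avg V n a = avg V n b + avg V n (a - b) := by simp
    rw [dist_eq_norm] at hab
    have := norm_avg_le V n (a - b)
    rw [e]
    have := norm_add_le (avg V n b) (avg V n (a - b))
    linarith
  have h2 : Tendsto (fun T => avg V T (a + b)) atTop (nhds b) := by
    have : Tendsto (fun T => avg V T a + b) atTop (nhds (0 + b)) := h1.add_const b
    rw [zero_add] at this
    refine this.congr' ?_
    filter_upwards [eventually_ge_atTop 1] with T hT
    rw [map_add, avg_inv V T hT b hb]
  refine ⟨b, hb, h2, fun z hz => ?_⟩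
  have h3 : Tendsto (fun T => inner ℝ z (avg V T (a+b))) atTop (nhds (inner ℝ z b)) :=
    (tendsto_const_nhds (x := z)).inner h2
  refine tendsto_nhds_unique (tendsto_const_nhds.congr' ?_) h3
  filter_upwards [eventually_ge_atTop 1] with T hT
  have h4 : ∀ t, inner ℝ z (V t (a+b)) = inner ℝ z (a+b) := fun t => by
    conv_lhs => rw [← hz t]
    exact (V t).inner_map_map _ _
  have : (2 * T : ℝ) ^ d ≠ 0 := by positivity
  rw [avg_apply, inner_smul_right, inner_sum]
  simp only [h4, Finset.sum_const, nsmul_eq_mul, card_box]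
  field_simp

end hilbert
end SET

namespace SET
section meas
variable {S : Type*} [MeasurableSpace S] {μ : Measure S}

lemma wop_mem (p : ENNReal) (c : S → ℝ) (ψ : S → S)
    (hψ : Measure.QuasiMeasurePreserving ψ μ μ) (hc : Measurable c)
    (hn : ∀ f : S → ℝ, eLpNorm (fun s => c s * f (ψ s)) p μ = eLpNorm f p μ) (f : Lp ℝ p μ) :
    MemLp (fun s => c s * f (ψ s)) p μ :=
  ⟨hc.aestronglyMeasurable.mul ((Lp.aestronglyMeasurable f).comp_quasiMeasurePreserving hψ),
      by rw [hn]; exact Lp.eLpNorm_lt_top f⟩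

noncomputable def wop (p : ENNReal) [Fact (1 ≤ p)] (c : S → ℝ) (ψ : S → S)
    (hψ : Measure.QuasiMeasurePreserving ψ μ μ) (hc : Measurable c)
    (hn : ∀ f : S → ℝ, eLpNorm (fun s => c s * f (ψ s)) p μ = eLpNorm f p μ) :
    Lp ℝ p μ →ₗᵢ[ℝ] Lp ℝ p μ :=
  have hm := wop_mem p c ψ hψ hc hn
  { toFun := fun f => (hm f).toLp
    map_add' := fun f g => by
      apply Lp.ext
      filter_upwards [(hm (f+g)).coeFn_toLp, (hm f).coeFn_toLp, (hm g).coeFn_toLp,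
        Lp.coeFn_add ((hm f).toLp) ((hm g).toLp), hψ.ae_eq (Lp.coeFn_add f g)] with s h1 h2 h3 h4 h5
      simp only [Function.comp, Pi.add_apply] at *
      rw [h1, h4, h2, h3, h5, mul_add]
    map_smul' := fun a f => by
      apply Lp.ext
      filter_upwards [(hm (a • f)).coeFn_toLp, (hm f).coeFn_toLp,
        Lp.coeFn_smul a ((hm f).toLp), hψ.ae_eq (Lp.coeFn_smul a f)] with s h1 h2 h4 h5
      simp only [Function.comp, Pi.smul_apply, RingHom.id_apply, smul_eq_mul] at *
      rw [h1, h4, h2, h5]; ring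
    norm_map' := fun f => by
      change ‖(hm f).toLp‖ = ‖f‖
      rw [Lp.norm_toLp, hn, Lp.norm_def] }

lemma wop_coe (p : ENNReal) [Fact (1 ≤ p)] (c : S → ℝ) (ψ : S → S)
    (hψ : Measure.QuasiMeasurePreserving ψ μ μ) (hc : Measurable c)
    (hn : ∀ f : S → ℝ, eLpNorm (fun s => c s * f (ψ s)) p μ = eLpNorm f p μ) (f : Lp ℝ p μ) :
    wop p c ψ hψ hc hn f =ᵐ[μ] fun s => c s * f (ψ s) :=
  MemLp.coeFn_toLp (wop_mem p c ψ hψ hc hn f)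

lemma sq_memLp (F : Lp ℝ 1 μ) : MemLp (fun s => √|F s|) 2 μ := by
  have hm : AEStronglyMeasurable (fun s => √|F s|) μ :=
    ((Real.continuous_sqrt.comp continuous_abs).comp_aestronglyMeasurable
      (Lp.aestronglyMeasurable F))
  rw [memLp_two_iff_integrable_sq hm]
  simp only [Real.sq_sqrt (abs_nonneg _)]
  exact (L1.integrable_coeFn F).abs

noncomputable def sq (F : Lp ℝ 1 μ) : Lp ℝ 2 μ := (sq_memLp F).toLp

lemma sq_coe (F : Lp ℝ 1 μ) : sq F =ᵐ[μ] fun s => √|F s| := MemLp.coeFn_toLp _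

lemma sqrt_abs_sub (a b : ℝ) : (√|a| - √|b|) * (√|a| - √|b|) ≤ |a - b| := by
  have ha := Real.sqrt_nonneg |a|
  have hb := Real.sqrt_nonneg |b|
  have ha' := Real.sq_sqrt (abs_nonneg a)
  have hb' := Real.sq_sqrt (abs_nonneg b)
  have h := abs_abs_sub_abs_le_abs_sub a b
  refine le_trans ?_ h
  rcases le_total (√|a|) (√|b|) with h1 | h1
  · refine le_trans ?_ (neg_le_abs _)
    nlinarith
  · refine le_trans ?_ (le_abs_self _)
    nlinarith

lemma norm_sq_sub (F G : Lp ℝ 1 μ) : ‖sq F - sq G‖ ^ 2 ≤ ‖F - G‖ := by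
  rw [← real_inner_self_eq_norm_sq, L2.inner_def, L1.norm_eq_integral_norm]
  refine integral_mono_ae (L2.integrable_inner _ _) (L1.integrable_coeFn _).norm ?_
  filter_upwards [Lp.coeFn_sub (sq F) (sq G), Lp.coeFn_sub F G, sq_coe F, sq_coe G] with s h1 h2 h3 h4
  simp only [Pi.sub_apply] at *
  rw [h1, h2, h3, h4]
  simpa [pow_two] using sqrt_abs_sub (F s) (G s)

lemma norm_sq_le (F : Lp ℝ 1 μ) : ‖sq F‖ ^ 2 ≤ ‖F‖ := by
  have h0 : sq (0 : Lp ℝ 1 μ) = 0 := by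
    apply Lp.ext
    filter_upwards [sq_coe (0 : Lp ℝ 1 μ), Lp.coeFn_zero ℝ 1 μ, Lp.coeFn_zero ℝ 2 μ] with s h1 h2 h3
    rw [h1, h2, h3]; simp
  simpa [h0] using norm_sq_sub F 0

variable {d : ℕ}

/-- a bundle of the data: L1 and L2 representations -/
structure Rep (μ : Measure S) (d : ℕ) where
  φ : (Fin d → ℤ) → S → S
  w : (Fin d → ℤ) → S → ℝ
  hφ : ∀ t, Measure.QuasiMeasurePreserving (φ t) μ μ
  hw : ∀ t s, 0 ≤ w t s
  U : (Fin d → ℤ) → Lp ℝ 1 μ →ₗᵢ[ℝ] Lp ℝ 1 μ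
  V : (Fin d → ℤ) → Lp ℝ 2 μ →ₗᵢ[ℝ] Lp ℝ 2 μ
  U_coe : ∀ t F, U t F =ᵐ[μ] fun s => w t s * F (φ t s)
  V_coe : ∀ t F, V t F =ᵐ[μ] fun s => √(w t s) * F (φ t s)
  U_add : ∀ u v x, U (u + v) x = U u (U v x)
  V_add : ∀ u v x, V (u + v) x = V u (V v x)
  V_zero : ∀ x, V 0 x = x

variable (R : Rep μ d)

lemma V_sq (u : Fin d → ℤ) (F : Lp ℝ 1 μ) : R.V u (sq F) = sq (R.U u F) := by
  apply Lp.ext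
  filter_upwards [R.V_coe u (sq F), sq_coe (R.U u F), R.U_coe u F,
    (R.hφ u).ae_eq (sq_coe F)] with s h1 h2 h3 h4
  simp only [Function.comp] at h4
  rw [h1, h2, h3, h4, abs_mul, abs_of_nonneg (R.hw u s), Real.sqrt_mul (R.hw u s)]

lemma coeFn_sum_Lp {ι : Type*} (A : Finset ι) (G : ι → Lp ℝ 1 μ) :
    (∑ t ∈ A, G t : Lp ℝ 1 μ) =ᵐ[μ] fun s => ∑ t ∈ A, G t s := by
  classical
  induction A using Finset.induction_on with
  | empty => simp only [Finset.sum_empty]; exact Lp.coeFn_zero ℝ 1 μ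
  | insert a A ha ih =>
    rw [Finset.sum_insert ha]
    filter_upwards [Lp.coeFn_add (G a) (∑ t ∈ A, G t), ih] with s h1 h2
    rw [h1, Pi.add_apply, h2, Finset.sum_insert ha]

lemma avg_U_coe (T : ℕ) (F : Lp ℝ 1 μ) : avg R.U T F =ᵐ[μ] fun s =>
    ((2 * T : ℝ) ^ d)⁻¹ * ∑ t ∈ box d T, R.w t s * F (R.φ t s) := by
  rw [avg_apply]
  have h1 : ∀ᵐ s ∂μ, ∀ t, R.U t F s = R.w t s * F (R.φ t s) :=
    ae_all_iff.2 fun t => R.U_coe t F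
  filter_upwards [h1, Lp.coeFn_smul (((2 * T : ℝ) ^ d)⁻¹) (∑ t ∈ box d T, R.U t F),
    coeFn_sum_Lp (box d T) (fun t => R.U t F)] with s h1 h2 h3
  rw [h2]
  simp only [Pi.smul_apply, smul_eq_mul, h3, h1]

lemma exists_q [SigmaFinite μ] : ∃ q : Lp ℝ 2 μ, (∀ t, R.V t q = q) ∧
    ∀ b : Lp ℝ 2 μ, (∀ t, R.V t b = b) → ∀ᵐ s ∂μ, q s = 0 → b s = 0 := by
  obtain ⟨e0, he0, hem, hei⟩ := exists_pos_lintegral_lt_of_sigmaFinite μ one_ne_zero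
  have he : MemLp (fun s => √(e0 s : ℝ)) 2 μ := by
    rw [memLp_two_iff_integrable_sq (by fun_prop)]
    simp only [Real.sq_sqrt NNReal.zero_le_coe]
    refine ⟨by fun_prop, ?_⟩
    rw [hasFiniteIntegral_iff_enorm]
    simpa using hei.trans ENNReal.one_lt_top
  obtain ⟨q, hq, -, hqz⟩ := mean_ergodic R.V R.V_add (he.toLp)
  refine ⟨q, hq, fun b hb => ?_⟩
  have hqm : MeasurableSet {s | q s = 0} :=
    (Lp.stronglyMeasurable q).measurable (measurableSet_singleton 0)
  have hb'm : MemLp ({s | q s = 0}.indicator fun s => |b s|) 2 μ :=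
    (Lp.memLp b).abs.indicator hqm
  have hb'c := hb'm.coeFn_toLp
  set b' := hb'm.toLp
  have hb' : ∀ t, R.V t b' = b' := fun t => by
    apply Lp.ext
    have e1 := R.V_coe t q
    have e2 := R.V_coe t b
    rw [hq t] at e1
    rw [hb t] at e2
    filter_upwards [R.V_coe t b', hb'c, (R.hφ t).ae_eq hb'c, e1, e2] with s h1 h2 h3 h4 h5
    simp only [Function.comp] at h3
    rw [h1, h2, h3]
    simp only [Set.indicator_apply, Set.mem_ofPred_eq]
    by_cases hw : √(R.w t s) = 0
    · rw [hw, zero_mul] at h4 h5 ⊢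
      simp [h5]
    · have : q s = 0 ↔ q (R.φ t s) = 0 := by rw [h4]; simp [hw]
      simp only [this]
      split_ifs
      · rw [h5, abs_mul, abs_of_nonneg (Real.sqrt_nonneg _)]
      · simp
  have h1 := hqz b' hb'
  have h2 : inner ℝ b' q = 0 := by
    rw [L2.inner_def]
    apply integral_eq_zero_of_ae
    filter_upwards [hb'c] with s hs
    rw [hs]
    simp only [Set.indicator_apply, Set.mem_ofPred_eq]
    split_ifs with h <;> simp [h]
  rw [h2, L2.inner_def, integral_eq_zero_iff_of_nonneg_ae ?_ (L2.integrable_inner _ _)] at h1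
  · filter_upwards [h1, hb'c, he.coeFn_toLp] with s h1 h2 h3 h4
    have : 0 < √(e0 s : ℝ) := Real.sqrt_pos.2 (by exact_mod_cast he0 s)
    rw [h2, h3] at h1
    simpa [h4, this.ne'] using h1
  · filter_upwards [hb'c, he.coeFn_toLp] with s h2 h3
    rw [h2, h3]
    simp only [Set.indicator_apply]
    split_ifs <;> simp; positivity

/-- null part -/
lemma null_part (q : Lp ℝ 2 μ) (hq : ∀ t, R.V t q = q)
    (hqb : ∀ b : Lp ℝ 2 μ, (∀ t, R.V t b = b) → ∀ᵐ s ∂μ, q s = 0 → b s = 0)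
    (F : Lp ℝ 1 μ) (hF : ∀ᵐ s ∂μ, q s ≠ 0 → F s = 0) (x : Lp ℝ 2 μ) :
    Tendsto (fun T => inner ℝ (sq (avg R.U T F)) x) atTop (nhds 0) := by
  obtain ⟨a, b, rfl, hb, ha⟩ := decomp R.V x
  have hz : ∀ T, inner ℝ (sq (avg R.U T F)) b = 0 := fun T => by
    rw [L2.inner_def]
    apply integral_eq_zero_of_ae
    have e1 : ∀ᵐ s ∂μ, ∀ t, q s = √(R.w t s) * q (R.φ t s) := ae_all_iff.2 fun t => by
      have := R.V_coe t q
      rwa [hq t] at this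
    have e2 : ∀ᵐ s ∂μ, ∀ t, q (R.φ t s) ≠ 0 → F (R.φ t s) = 0 :=
      ae_all_iff.2 fun t => (R.hφ t).ae hF
    filter_upwards [sq_coe (avg R.U T F), avg_U_coe R T F, hqb b hb, e1, e2] with s h1 h2 h3 h4 h5
    by_cases h : q s = 0
    · simp [h3 h]
    · have : ∀ t, F (R.φ t s) = 0 := fun t => h5 t fun h' => h (by rw [h4 t, h', mul_zero])
      rw [h1, h2]; simp [this]
  have := asym R.V R.V_add R.V_zero (fun T => sq (avg R.U T F)) (√‖F‖) (fun T => ?_) (fun u => ?_) a ha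
  · simpa [inner_add_right, hz] using this
  · exact Real.le_sqrt_of_sq_le ((norm_sq_le _).trans (norm_avg_le _ _ _))
  · rw [tendsto_zero_iff_norm_tendsto_zero]
    have h1 : Tendsto (fun T => √‖avg R.U T (R.U u F - F)‖) atTop (nhds 0) := by
      have h := (folner R.U R.U_add u F).norm.sqrt
      simpa using h
    refine squeeze_zero (fun _ => norm_nonneg _) (fun T => ?_) h1
    apply Real.le_sqrt_of_sq_le
    rw [V_sq, comm_avg R.U R.U_add, map_sub]
    exact norm_sq_sub _ _

lemma null_meas (F : Lp ℝ 1 μ)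
    (h : ∀ x : Lp ℝ 2 μ, Tendsto (fun T => inner ℝ (sq (avg R.U T F)) x) atTop (nhds 0))
    (ε : ℝ) (hε : 0 < ε) (B : Set S) (hB : MeasurableSet B) (hμB : μ B < ⊤) :
    Tendsto (fun T => μ ({s | ε < |avg R.U T F s|} ∩ B)) atTop (nhds 0) := by
  have h1 := h (indicatorConstLp 2 hB hμB.ne 1)
  have e : ∀ T, inner ℝ (sq (avg R.U T F)) (indicatorConstLp 2 hB hμB.ne (1:ℝ)) =
      ∫ s in B, √|avg R.U T F s| ∂μ := fun T => by
    rw [real_inner_comm, L2.inner_indicatorConstLp_eq_setIntegral_inner]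
    refine integral_congr_ae (ae_restrict_of_ae ?_)
    filter_upwards [sq_coe (avg R.U T F)] with s hs
    simp [hs]
  simp only [e] at h1
  have h2 : Tendsto (fun T => ENNReal.ofReal ((√ε)⁻¹ * ∫ s in B, √|avg R.U T F s| ∂μ)) atTop
      (nhds 0) := by
    simpa using ENNReal.tendsto_ofReal (h1.const_mul (√ε)⁻¹)
  refine tendsto_of_tendsto_of_tendsto_of_le_of_le tendsto_const_nhds h2 (fun _ => zero_le)
    fun T => ?_
  have hi : Integrable (fun s => √|avg R.U T F s|) (μ.restrict B) := by
    have : IsFiniteMeasure (μ.restrict B) := ⟨by simpa using hμB⟩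
    exact ((sq_memLp (avg R.U T F)).restrict B).integrable (by norm_num)
  have hp : 0 < √ε := Real.sqrt_pos.2 hε
  have hmk := mul_meas_ge_le_integral_of_nonneg (μ := μ.restrict B)
    (Eventually.of_forall fun s => Real.sqrt_nonneg |avg R.U T F s|) hi (√ε)
  have hle : μ ({s | ε < |avg R.U T F s|} ∩ B) ≤ (μ.restrict B) {s | √ε ≤ √|avg R.U T F s|} := by
    rw [Measure.restrict_apply' hB]
    refine measure_mono (Set.inter_subset_inter_left _ fun s hs => Real.sqrt_le_sqrt (le_of_lt hs))
  have : IsFiniteMeasure (μ.restrict B) := ⟨by simpa using hμB⟩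
  refine hle.trans ?_
  rw [← ENNReal.ofReal_toReal (measure_ne_top (μ.restrict B) _)]
  apply ENNReal.ofReal_le_ofReal
  rw [inv_mul_eq_div, le_div_iff₀ hp, mul_comm]
  exact hmk

/-- positive part -/
lemma pos_part (q : Lp ℝ 2 μ) (hq : ∀ t, R.V t q = q)
    (F : Lp ℝ 1 μ) (hF : ∀ᵐ s ∂μ, q s = 0 → F s = 0) :
    ∃ z, Tendsto (fun T => avg R.U T F) atTop (nhds z) := by
  let M := (ContinuousLinearMap.mul ℝ ℝ).holderL μ 2 2 1 q
  have M_coe : ∀ k, M k =ᵐ[μ] fun s => q s * k s := fun k =>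
    (ContinuousLinearMap.mul ℝ ℝ).coeFn_holder q k
  have hUM : ∀ t k, R.U t (M k) = M (R.V t k) := fun t k => by
    apply Lp.ext
    have e1 := R.V_coe t q
    rw [hq t] at e1
    filter_upwards [R.U_coe t (M k), M_coe (R.V t k), (R.hφ t).ae_eq (M_coe k), R.V_coe t k, e1]
      with s h1 h2 h3 h4 h5
    simp only [Function.comp] at h3
    rw [h1, h2, h3, h4, h5]
    have := Real.mul_self_sqrt (R.hw t s)
    linear_combination (-(q (R.φ t s) * k (R.φ t s))) * this
  have hA : ∀ T k, avg R.U T (M k) = M (avg R.V T k) := fun T k => by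
    simp only [avg_apply, map_smul, map_sum, hUM]
  apply closed_conv
  intro ε hε
  have hqm := (Lp.stronglyMeasurable q).measurable
  have hFm := (Lp.stronglyMeasurable F).measurable
  let C : ℕ → Set S := fun n => {s | |F s| ≤ n * (q s * q s)}
  have hC : ∀ n, MeasurableSet (C n) := fun n => measurableSet_le (by fun_prop) (by fun_prop)
  let k : ℕ → S → ℝ := fun n => (C n).indicator fun s => F s / q s
  have hk : ∀ n, MemLp (k n) 2 μ := fun n => by
    have hkm : Measurable (k n) := (hFm.div hqm).indicator (hC n)
    rw [memLp_two_iff_integrable_sq hkm.aestronglyMeasurable]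
    refine Integrable.mono' ((L1.integrable_coeFn F).abs.const_mul (n:ℝ))
      (hkm.pow_const 2).aestronglyMeasurable (Eventually.of_forall fun s => ?_)
    simp only [k, Set.indicator_apply]
    split_ifs with h
    · by_cases h0 : q s = 0
      · simp [h0]; positivity
      · have h1 : |F s| ≤ n * (q s * q s) := h
        have h2 : 0 < q s * q s := mul_self_pos.2 h0
        rw [Real.norm_of_nonneg (sq_nonneg _), div_pow, ← sq_abs (F s), pow_two (q s),
          div_le_iff₀ h2]
        nlinarith [abs_nonneg (F s)]
    · simp; positivity
  have hlim : Tendsto (fun n => ‖F - M (hk n).toLp‖) atTop (nhds 0) := by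
    have e : ∀ n, ‖F - M (hk n).toLp‖ = ∫ s, ‖F s - q s * k n s‖ ∂μ := fun n => by
      rw [L1.norm_eq_integral_norm]
      refine integral_congr_ae ?_
      filter_upwards [Lp.coeFn_sub F (M (hk n).toLp), M_coe (hk n).toLp, (hk n).coeFn_toLp]
        with s h1 h2 h3
      rw [h1, Pi.sub_apply, h2, h3]
    simp only [e]
    have : Tendsto (fun n => ∫ s, ‖F s - q s * k n s‖ ∂μ) atTop (nhds (∫ s, (0:ℝ) ∂μ)) := by
      refine tendsto_integral_of_dominated_convergence (fun s => |F s|) (fun n => ?_)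
        (L1.integrable_coeFn F).abs (fun n => ?_) ?_
      · have hkm : Measurable (k n) := (hFm.div hqm).indicator (hC n)
        exact (hFm.sub (hqm.mul hkm)).norm.aestronglyMeasurable
      · refine Eventually.of_forall fun s => ?_
        simp only [k, Set.indicator_apply]
        split_ifs
        · by_cases h0 : q s = 0
          · simp [h0]
          · rw [mul_div_cancel₀ _ h0]; simp
        · simp
      · filter_upwards [hF] with s hs
        by_cases h0 : q s = 0
        · simp [h0, hs h0]
        · have h2 : 0 < q s * q s := mul_self_pos.2 h0
          obtain ⟨N, hN⟩ := exists_nat_ge (|F s| / (q s * q s))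
          refine tendsto_const_nhds.congr' ?_
          filter_upwards [eventually_ge_atTop N] with n hn
          have : s ∈ C n := by
            change |F s| ≤ n * (q s * q s)
            rw [div_le_iff₀ h2] at hN
            refine hN.trans ?_
            gcongr
          simp only [k, Set.indicator_of_mem this]
          rw [mul_div_cancel₀ _ h0]; simp
    simpa using this
  obtain ⟨n, hn⟩ := (hlim.eventually (gt_mem_nhds hε)).exists
  obtain ⟨y, -, hy, -⟩ := mean_ergodic R.V R.V_add (hk n).toLp
  refine ⟨M (hk n).toLp, hn, M y, ?_⟩
  simp only [hA]
  exact (M.continuous.tendsto y).comp hy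

theorem core [SigmaFinite μ] (f₀ : S → ℝ) (hf₀ : Integrable f₀ μ) :
    ∃ ftil : S → ℝ, Integrable ftil μ ∧
      (∀ ε : ℝ, 0 < ε → ∀ B : Set S, MeasurableSet B → μ B < ⊤ →
        Tendsto (fun T : ℕ =>
          μ ({s | ε < |((2 * T : ℝ) ^ d)⁻¹ *
              (∑ t ∈ box d T, R.w t s * f₀ (R.φ t s)) - ftil s|} ∩ B))
          atTop (nhds 0)) ∧
      (∀ t, ∀ᵐ s ∂μ, R.w t s * ftil (R.φ t s) = ftil s) := by
  obtain ⟨q, hq, hqb⟩ := exists_q R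
  have hqm : MeasurableSet {s | q s = 0} :=
    (Lp.stronglyMeasurable q).measurable (measurableSet_singleton 0)
  have hN := hf₀.indicator hqm
  have hP := hf₀.indicator hqm.compl
  have hNc := hN.coeFn_toL1
  have hPc := hP.coeFn_toL1
  set FN := hN.toL1
  set FP := hP.toL1
  obtain ⟨z, hz⟩ := pos_part R q hq FP (by
    filter_upwards [hPc] with s h1 h2
    rw [h1]; simp [h2])
  have hzi := lim_inv R.U R.U_add FP z hz
  have hn := null_meas R FN (null_part R q hq hqb FN (by
    filter_upwards [hNc] with s h1 h2
    rw [h1]; simp [h2]))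
  refine ⟨z, L1.integrable_coeFn z, fun ε hε B hB hμB => ?_, fun t => ?_⟩
  · have h1 := hn (ε/2) (by positivity) B hB hμB
    have h2 := tendstoInMeasure_of_tendsto_Lp hz (ENNReal.ofReal (ε/2)) (by simpa using hε)
    have h3 := h1.add h2
    rw [add_zero] at h3
    refine tendsto_of_tendsto_of_tendsto_of_le_of_le tendsto_const_nhds h3 (fun _ => zero_le)
      fun T => ?_
    refine le_trans (measure_mono_ae ?_) (measure_union_le _ _)
    have e1 : ∀ᵐ s ∂μ, ∀ t, FN (R.φ t s) = {s | q s = 0}.indicator f₀ (R.φ t s) :=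
      ae_all_iff.2 fun t => (R.hφ t).ae_eq hNc
    have e2 : ∀ᵐ s ∂μ, ∀ t, FP (R.φ t s) = {s | q s = 0}ᶜ.indicator f₀ (R.φ t s) :=
      ae_all_iff.2 fun t => (R.hφ t).ae_eq hPc
    filter_upwards [e1, e2, avg_U_coe R T FN, avg_U_coe R T FP] with s a1 a2 a3 a4
    rintro ⟨h, hsB⟩
    have h : ε < |((2 * T : ℝ) ^ d)⁻¹ * (∑ t ∈ box d T, R.w t s * f₀ (R.φ t s)) - z s| := h
    have key : ((2 * T : ℝ) ^ d)⁻¹ * (∑ t ∈ box d T, R.w t s * f₀ (R.φ t s)) =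
        avg R.U T FN s + avg R.U T FP s := by
      rw [a3, a4, ← mul_add, ← Finset.sum_add_distrib]
      congr 1
      refine Finset.sum_congr rfl fun t _ => ?_
      rw [a1, a2, ← mul_add]
      congr 1
      exact (congrFun (Set.indicator_self_add_compl {s | q s = 0} f₀) (R.φ t s)).symm
    rw [key] at h
    by_cases hc : ε / 2 < |avg R.U T FN s|
    · exact Or.inl ⟨hc, hsB⟩
    · right
      change ENNReal.ofReal (ε/2) ≤ edist _ _
      rw [edist_dist, Real.dist_eq]
      apply ENNReal.ofReal_le_ofReal
      have := abs_add_le (avg R.U T FN s) (avg R.U T FP s - z s)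
      rw [← add_sub_assoc] at this
      linarith
  · have := R.U_coe t z
    rw [hzi t] at this
    filter_upwards [this] with s hs using hs.symm

end meas
end SET

open MeasureTheory Filter

namespace SET
section final
variable {S : Type*} [MeasurableSpace S]

def toEquiv {d : ℕ} (φ : (Fin d → ℤ) → S → S) (hφmeas : ∀ t, Measurable (φ t))
    (hid : ∀ s, φ 0 s = s) (hcomp : ∀ u v s, φ (u + v) s = φ u (φ v s)) (t : Fin d → ℤ) :
    S ≃ᵐ S where
  toFun := φ t
  invFun := φ (-t)
  left_inv := fun s => by rw [← hcomp, neg_add_cancel, hid]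
  right_inv := fun s => by rw [← hcomp, add_neg_cancel, hid]
  measurable_toFun := hφmeas t
  measurable_invFun := hφmeas (-t)

theorem exists_rep
    (μ : Measure S) [SigmaFinite μ] (d : ℕ)
    (φ : (Fin d → ℤ) → S → S)
    (hφmeas : ∀ t, Measurable (φ t))
    (hid : ∀ s, φ 0 s = s)
    (hcomp : ∀ u v s, φ (u + v) s = φ u (φ v s))
    (hns : ∀ t, μ.map (φ t) ≪ μ ∧ μ ≪ μ.map (φ t))
    (w : (Fin d → ℤ) → S → ℝ)
    (hwmeas : ∀ t, Measurable (w t))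
    (hwnonneg : ∀ t s, 0 ≤ w t s)
    (hwver : ∀ t, (fun s => ENNReal.ofReal (w t s)) =ᵐ[μ] (μ.map (φ (-t))).rnDeriv μ) :
    ∃ R : Rep μ d, R.φ = φ ∧ R.w = w := by
  have hq : ∀ t, Measure.QuasiMeasurePreserving (φ t) μ μ := fun t => ⟨hφmeas t, (hns t).1⟩
  have hwm : ∀ t, Measurable fun s => ENNReal.ofReal (w t s) := fun t => (hwmeas t).ennreal_ofReal
  have hL : ∀ t (F : S → ENNReal), ∫⁻ s, ENNReal.ofReal (w t s) * F (φ t s) ∂μ = ∫⁻ s, F s ∂μ := by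
    intro t F
    have h1 : μ.withDensity (fun s => ENNReal.ofReal (w t s)) = μ.map (φ (-t)) := by
      have : SigmaFinite (μ.map (φ (-t))) :=
        (toEquiv φ hφmeas hid hcomp (-t)).sigmaFinite_map
      rw [withDensity_congr_ae (hwver t), Measure.withDensity_rnDeriv_eq _ _ (hns (-t)).1]
    have h2 := lintegral_withDensity_eq_lintegral_mul_non_measurable μ (hwm t)
      (Eventually.of_forall fun _ => ENNReal.ofReal_lt_top) (fun s => F (φ t s))
    simp only [Pi.mul_apply] at h2
    rw [← h2, h1]
    have h3 := lintegral_map_equiv (μ := μ) (fun s => F (φ t s)) (toEquiv φ hφmeas hid hcomp (-t))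
    refine h3.trans (lintegral_congr fun s => ?_)
    change F (φ t (φ (-t) s)) = F s
    rw [← hcomp, add_neg_cancel, hid]
  have hN1 : ∀ t (f : S → ℝ), eLpNorm (fun s => w t s * f (φ t s)) 1 μ = eLpNorm f 1 μ := by
    intro t f
    rw [eLpNorm_one_eq_lintegral_enorm, eLpNorm_one_eq_lintegral_enorm, ← hL t (fun s => ‖f s‖ₑ)]
    refine lintegral_congr fun s => ?_
    rw [enorm_mul, Real.enorm_of_nonneg (hwnonneg t s)]
  have hN2 : ∀ t (f : S → ℝ), eLpNorm (fun s => √(w t s) * f (φ t s)) 2 μ = eLpNorm f 2 μ := by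
    intro t f
    rw [eLpNorm_eq_lintegral_rpow_enorm_toReal (by norm_num) (by norm_num),
      eLpNorm_eq_lintegral_rpow_enorm_toReal (by norm_num) (by norm_num),
      ← hL t (fun s => ‖f s‖ₑ ^ (2 : ENNReal).toReal)]
    congr 1
    refine lintegral_congr fun s => ?_
    simp only [ENNReal.toReal_ofNat, ENNReal.rpow_ofNat]
    rw [enorm_mul, mul_pow, Real.enorm_of_nonneg (Real.sqrt_nonneg _),
      ← ENNReal.ofReal_pow (Real.sqrt_nonneg _), Real.sq_sqrt (hwnonneg t s)]
  -- uniqueness of densities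
  have huniq : ∀ t (g : S → ℝ), Measurable g → (∀ s, 0 ≤ g s) →
      (∀ F : S → ENNReal, Measurable F →
        ∫⁻ s, ENNReal.ofReal (g s) * F (φ t s) ∂μ = ∫⁻ s, F s ∂μ) → g =ᵐ[μ] w t := by
    intro t g hg hg0 hF
    have h1 : μ.withDensity (fun s => ENNReal.ofReal (g s)) =
        μ.withDensity (fun s => ENNReal.ofReal (w t s)) := by
      ext A hA
      rw [withDensity_apply _ hA, withDensity_apply _ hA, ← lintegral_indicator hA,
        ← lintegral_indicator hA]
      have e : ∀ g : S → ℝ, ∫⁻ s, A.indicator (fun s => ENNReal.ofReal (g s)) s ∂μ =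
          ∫⁻ s, ENNReal.ofReal (g s) * (fun s => A.indicator (fun _ => (1:ENNReal)) (φ (-t) s)) (φ t s) ∂μ := by
        intro g
        refine lintegral_congr fun s => ?_
        simp only [← hcomp, neg_add_cancel, hid]
        by_cases h : s ∈ A <;> simp [h]
      rw [e g, e (w t)]
      refine (hF (fun s => A.indicator (fun _ => (1:ENNReal)) (φ (-t) s)) ?_).trans (hL t _).symm
      exact (measurable_const.indicator hA).comp (hφmeas (-t))
    rw [withDensity_eq_iff_of_sigmaFinite hg.ennreal_ofReal.aemeasurable (hwm t).aemeasurable] at h1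
    filter_upwards [h1] with s hs
    exact (ENNReal.ofReal_eq_ofReal_iff (hg0 s) (hwnonneg t s)).1 hs
  have hw0 : ∀ᵐ s ∂μ, 1 = w 0 s := huniq 0 (fun _ => 1) measurable_const (fun _ => zero_le_one)
    (fun F _ => by simp [hid])
  have hwadd : ∀ u v, ∀ᵐ s ∂μ, w u s * w v (φ u s) = w (u + v) s := fun u v => by
    refine huniq (u + v) (fun s => w u s * w v (φ u s)) ((hwmeas u).mul ((hwmeas v).comp (hφmeas u)))
      (fun s => mul_nonneg (hwnonneg _ _) (hwnonneg _ _)) (fun F _ => ?_)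
    rw [← hL v F, ← hL u (fun s => ENNReal.ofReal (w v s) * F (φ v s))]
    refine lintegral_congr fun s => ?_
    rw [ENNReal.ofReal_mul (hwnonneg _ _), add_comm u v, hcomp, mul_assoc]
  let U := fun t => wop 1 (w t) (φ t) (hq t) (hwmeas t) (hN1 t)
  let V := fun t => wop 2 (fun s => √(w t s)) (φ t) (hq t) (hwmeas t).sqrt (hN2 t)
  have U_coe : ∀ t F, U t F =ᵐ[μ] fun s => w t s * F (φ t s) := fun t F => wop_coe _ _ _ _ _ _ F
  have V_coe : ∀ t F, V t F =ᵐ[μ] fun s => √(w t s) * F (φ t s) := fun t F => wop_coe _ _ _ _ _ _ F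
  refine ⟨⟨φ, w, hq, hwnonneg, U, V, U_coe, V_coe, fun u v x => ?_, fun u v x => ?_, fun x => ?_⟩,
    rfl, rfl⟩
  · apply Lp.ext
    filter_upwards [U_coe (u + v) x, U_coe u (U v x), (hq u).ae_eq (U_coe v x), hwadd u v]
      with s h1 h2 h3 h4
    simp only [Function.comp] at h3
    rw [h1, h2, h3, ← h4, add_comm u v, hcomp, mul_assoc]
  · apply Lp.ext
    filter_upwards [V_coe (u + v) x, V_coe u (V v x), (hq u).ae_eq (V_coe v x), hwadd u v]
      with s h1 h2 h3 h4
    simp only [Function.comp] at h3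
    rw [h1, h2, h3, ← h4, add_comm u v, hcomp, Real.sqrt_mul (hwnonneg _ _), mul_assoc]
  · apply Lp.ext
    filter_upwards [V_coe 0 x, hw0] with s h1 h2
    rw [h1, ← h2, hid]; simp

end final
end SET

/-- Multiparameter stochastic ergodic theorem, discrete case: for a nonsingular
`ℤ^d`-action `{φ_t}` on a standard Borel space with σ-finite measure `μ`, with `w(t,·)` a
nonnegative measurable version of the Radon–Nikodym derivative of `A ↦ μ(φ_t(A))`
(i.e. of `μ ∘ φ_{-t}⁻¹`) with respect to `μ`, and `f₀ ∈ L¹(μ)`, the averages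
`A_T f = (2T)^{-d} Σ_{t ∈ (−T,T]^d ∩ ℤ^d} w(t,·) f₀(φ_t(·))` converge locally in measure to
some `f̃ ∈ L¹(μ)` satisfying `w(t,s) f̃(φ_t(s)) = f̃(s)` a.e. for every `t`. -/
theorem stmt6 {S : Type*} [MeasurableSpace S] [StandardBorelSpace S]
    (μ : Measure S) [SigmaFinite μ] (d : ℕ)
    (φ : (Fin d → ℤ) → S → S)
    (hφmeas : ∀ t, Measurable (φ t))
    (hid : ∀ s, φ 0 s = s)
    (hcomp : ∀ u v s, φ (u + v) s = φ u (φ v s))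
    (hns : ∀ t, μ.map (φ t) ≪ μ ∧ μ ≪ μ.map (φ t))
    (w : (Fin d → ℤ) → S → ℝ)
    (hwmeas : ∀ t, Measurable (w t))
    (hwnonneg : ∀ t s, 0 ≤ w t s)
    (hwver : ∀ t, (fun s => ENNReal.ofReal (w t s)) =ᵐ[μ] (μ.map (φ (-t))).rnDeriv μ)
    (f₀ : S → ℝ) (hf₀ : Integrable f₀ μ) :
    ∃ ftil : S → ℝ, Integrable ftil μ ∧
      (∀ ε : ℝ, 0 < ε → ∀ B : Set S, MeasurableSet B → μ B < ⊤ →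
        Tendsto (fun T : ℕ =>
          μ ({s | ε < |((2 * T : ℝ) ^ d)⁻¹ *
              (∑ t ∈ Fintype.piFinset fun _ : Fin d => Finset.Ioc (-(T : ℤ)) (T : ℤ),
                w t s * f₀ (φ t s)) - ftil s|} ∩ B))
          atTop (nhds 0)) ∧
      (∀ t, ∀ᵐ s ∂μ, w t s * ftil (φ t s) = ftil s) := by
  obtain ⟨R, rfl, rfl⟩ := SET.exists_rep μ d φ hφmeas hid hcomp hns w hwmeas hwnonneg hwver
  exact SET.core R f₀ hf₀
end

section
/- (Multiparameter stochastic ergodic theorem, continuous case.) Let (S, 𝓑, μ) be a standard Borel space with a σ-finite measure μ, let {φ_t}_{t∈ℝ^d} be a nonsingular ℝ^d-action on (S,μ) with (s,t) ↦ φ_t(s) jointly measurable, and let w : ℝ^d × S → (0,∞) be jointly measurable such that for each t ∈ ℝ^d, w(t,·) is a version of the Radon–Nikodym derivative of the measure A ↦ μ(φ_t(A)) with respect to μ, and w(t+h,s) = w(h,s)·w(t,φ_h(s)) for all t,h ∈ ℝ^d and all s ∈ S. Let f₀ ∈ L¹(S,μ) and set f(t,s) := w(t,s) f₀(φ_t(s)).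 Then there exists f̃ ∈ L¹(S,μ) such that the averages A_T f := (2T)^{-d} ∫_{(−T,T]^d} f(t,·) dt converge to f̃ locally in measure as T → ∞, and f̃ is invariant: for every t ∈ ℝ^d, w(t,s) f̃(φ_t(s)) = f̃(s) for μ-a.e. s. -/
open MeasureTheory Filter

structure Sys {S : Type*} [MeasurableSpace S] (μ : Measure S) (d : ℕ)
    (φ : (Fin d → ℝ) → S → S) (w : (Fin d → ℝ) → S → ℝ) : Prop where
  joint : Measurable fun p : (Fin d → ℝ) × S => φ p.1 p.2
  hid : ∀ s, φ 0 s = s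
  hcomp : ∀ u v s, φ (u + v) s = φ u (φ v s)
  hns : ∀ t, μ.map (φ t) ≪ μ ∧ μ ≪ μ.map (φ t)
  wjoint : Measurable fun p : (Fin d → ℝ) × S => w p.1 p.2
  wpos : ∀ t s, 0 < w t s
  wver : ∀ t, (fun s => ENNReal.ofReal (w t s)) =ᵐ[μ] (μ.map (φ (-t))).rnDeriv μ
  wcoc : ∀ t h : Fin d → ℝ, ∀ s, w (t + h) s = w h s * w t (φ h s)

lemma mkOp {S : Type*} [MeasurableSpace S] {μ : Measure S} {p q : ENNReal}
    [Fact (1 ≤ p)] [Fact (1 ≤ q)] (K : (S → ℝ) → (S → ℝ)) (C : NNReal)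
    (hcongr : ∀ f g, f =ᵐ[μ] g → K f =ᵐ[μ] K g)
    (hadd : ∀ f g, Measurable f → Measurable g → MemLp f p μ → MemLp g p μ →
      K (f + g) =ᵐ[μ] K f + K g)
    (hsmul : ∀ (c : ℝ) f, K (c • f) =ᵐ[μ] c • K f)
    (hmeas : ∀ f, Measurable f → MemLp f p μ → AEStronglyMeasurable (K f) μ)
    (hnorm : ∀ f, Measurable f → MemLp f p μ → eLpNorm (K f) q μ ≤ C * eLpNorm f p μ) :
    ∃ L : Lp ℝ p μ →L[ℝ] Lp ℝ q μ, (∀ x, L x =ᵐ[μ] K x) ∧ ∀ x, ‖L x‖ ≤ C * ‖x‖ := by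
  have hm : ∀ x : Lp ℝ p μ, Measurable (x : S → ℝ) := fun x => (Lp.stronglyMeasurable x).measurable
  have hmem : ∀ x : Lp ℝ p μ, MemLp (K x) q μ := fun x =>
    ⟨hmeas _ (hm x) (Lp.memLp x), (hnorm _ (hm x) (Lp.memLp x)).trans_lt
      (ENNReal.mul_lt_top (by simp) (Lp.memLp x).2)⟩
  let L0 : Lp ℝ p μ →ₗ[ℝ] Lp ℝ q μ :=
    { toFun := fun x => (hmem x).toLp
      map_add' := by
        intro x y
        apply Lp.ext
        filter_upwards [(hmem (x+y)).coeFn_toLp, Lp.coeFn_add (hmem x).toLp (hmem y).toLp,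
          (hmem x).coeFn_toLp, (hmem y).coeFn_toLp, hcongr _ _ (Lp.coeFn_add x y),
          hadd x y (hm x) (hm y) (Lp.memLp x) (Lp.memLp y)] with s h1 h2 h3 h4 h5 h6
        rw [h1, h2, h5, h6, Pi.add_apply, Pi.add_apply, h3, h4]
      map_smul' := by
        intro c x
        apply Lp.ext
        filter_upwards [(hmem (c • x)).coeFn_toLp, Lp.coeFn_smul c (hmem x).toLp,
          (hmem x).coeFn_toLp, hcongr _ _ (Lp.coeFn_smul c x),
          hsmul c x] with s h1 h2 h3 h5 h6
        rw [h1, RingHom.id_apply, h2, h5, h6, Pi.smul_apply, Pi.smul_apply, h3] }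
  have hb : ∀ x, ‖L0 x‖ ≤ C * ‖x‖ := by
    intro x
    change ‖(hmem x).toLp‖ ≤ _
    rw [Lp.norm_toLp, Lp.norm_def, ← ENNReal.coe_toReal, ← ENNReal.toReal_mul]
    exact ENNReal.toReal_mono (ENNReal.mul_ne_top (by simp) (Lp.memLp x).2.ne)
      (hnorm _ (hm x) (Lp.memLp x))
  exact ⟨L0.mkContinuous C hb, fun x => (hmem x).coeFn_toLp, hb⟩

set_option linter.unusedSectionVars false
namespace Sys
variable {S : Type*} [MeasurableSpace S] {μ : Measure S} [SigmaFinite μ] {d : ℕ}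
    {φ : (Fin d → ℝ) → S → S} {w : (Fin d → ℝ) → S → ℝ}

lemma mφ (h : Sys μ d φ w) (t) : Measurable (φ t) := h.joint.comp measurable_prodMk_left

lemma mw (h : Sys μ d φ w) (t) : Measurable (w t) := h.wjoint.comp measurable_prodMk_left

lemma qmp (h : Sys μ d φ w) (t) : Measure.QuasiMeasurePreserving (φ t) μ μ := ⟨h.mφ t, (h.hns t).1⟩

lemma cancel (h : Sys μ d φ w) (t s) : φ t (φ (-t) s) = s := by
  rw [← h.hcomp, add_neg_cancel, h.hid]

lemma lint (h : Sys μ d φ w) (t) (g : S → ENNReal) (hg : Measurable g) :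
    ∫⁻ s, ENNReal.ofReal (w t s) * g (φ t s) ∂μ = ∫⁻ s, g s ∂μ := by
  have e : μ.withDensity ((μ.map (φ (-t))).rnDeriv μ) = μ.map (φ (-t)) :=
    Measure.withDensity_rnDeriv_eq _ _ (h.hns (-t)).1
  calc _ = ∫⁻ s, (μ.map (φ (-t))).rnDeriv μ s * g (φ t s) ∂μ := by
        apply lintegral_congr_ae
        filter_upwards [h.wver t] with s hs
        rw [← hs]
    _ = ∫⁻ s, g (φ t s) ∂(μ.withDensity ((μ.map (φ (-t))).rnDeriv μ)) := by
        exact (lintegral_withDensity_eq_lintegral_mul _ (Measure.measurable_rnDeriv _ _)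
          (hg.comp (h.mφ t))).symm
    _ = ∫⁻ s, g s ∂μ := by
        rw [e]
        refine (lintegral_map (hg.comp (h.mφ t)) (h.mφ _)).trans ?_
        simp only [Function.comp_apply, h.cancel]

/-- L1 op -/
lemma opU (h : Sys μ d φ w) (t) : ∃ L : Lp ℝ 1 μ →L[ℝ] Lp ℝ 1 μ,
    (∀ x : Lp ℝ 1 μ, L x =ᵐ[μ] fun s => w t s * x (φ t s)) := by
  obtain ⟨L, h1, -⟩ := mkOp (μ := μ) (p := 1) (q := 1) (fun f s => w t s * f (φ t s)) 1
    (fun f g hfg => by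
      filter_upwards [(h.qmp t).ae_eq_comp hfg] with s hs
      simp only [Function.comp_apply] at hs
      rw [hs])
    (fun f g _ _ _ _ => Eventually.of_forall fun s => by simp [mul_add])
    (fun c f => Eventually.of_forall fun s => by simp [mul_left_comm])
    (fun f hf _ => ((h.mw t).mul (hf.comp (h.mφ t))).aestronglyMeasurable)
    (fun f hf _ => by
      rw [eLpNorm_one_eq_lintegral_enorm, eLpNorm_one_eq_lintegral_enorm, ← h.lint t _ hf.enorm]
      simp [enorm_mul, Real.enorm_of_nonneg (h.wpos t _).le])
  exact ⟨L, h1⟩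

lemma opV (h : Sys μ d φ w) (t) : ∃ L : Lp ℝ 2 μ →L[ℝ] Lp ℝ 2 μ,
    (∀ x : Lp ℝ 2 μ, L x =ᵐ[μ] fun s => √(w t s) * x (φ t s)) ∧ ∀ x, ‖L x‖ = ‖x‖ := by
  have key : ∀ f : S → ℝ, Measurable f →
      eLpNorm (fun s => √(w t s) * f (φ t s)) 2 μ = eLpNorm f 2 μ := by
    intro f hf
    rw [eLpNorm_eq_lintegral_rpow_enorm_toReal (by simp) (by simp),
      eLpNorm_eq_lintegral_rpow_enorm_toReal (by simp) (by simp), 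
      ← h.lint t _ (hf.enorm.pow_const _)]
    congr 2
    ext s
    rw [enorm_mul, ENNReal.mul_rpow_of_nonneg _ _ (by simp)]
    congr 1
    rw [Real.enorm_of_nonneg (Real.sqrt_nonneg _), ENNReal.ofReal_rpow_of_nonneg (Real.sqrt_nonneg _) (by simp)]
    simp [Real.sq_sqrt (h.wpos t s).le]
  obtain ⟨L, h1, -⟩ := mkOp (μ := μ) (p := 2) (q := 2) (fun f s => √(w t s) * f (φ t s)) 1
    (fun f g hfg => by
      filter_upwards [(h.qmp t).ae_eq_comp hfg] with s hs
      simp only [Function.comp_apply] at hs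
      rw [hs])
    (fun f g _ _ _ _ => Eventually.of_forall fun s => by simp [mul_add])
    (fun c f => Eventually.of_forall fun s => by simp [mul_left_comm])
    (fun f hf _ => ((h.mw t).sqrt.mul (hf.comp (h.mφ t))).aestronglyMeasurable)
    (fun f hf _ => by simp [key f hf])
  refine ⟨L, h1, fun x => ?_⟩
  rw [Lp.norm_def, Lp.norm_def, eLpNorm_congr_ae (h1 x), key _ (Lp.stronglyMeasurable x).measurable]

lemma congrA (h : Sys μ d φ w) (f g : S → ℝ) (hfg : f =ᵐ[μ] g) :
    ∀ᵐ s ∂μ, ∀ᵐ t : (Fin d → ℝ), f (φ t s) = g (φ t s) := by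
  have hN : μ (toMeasurable μ {s | f s ≠ g s}) = 0 := by
    rw [measure_toMeasurable]; exact hfg
  have hm := measurableSet_toMeasurable μ {s | f s ≠ g s}
  have hs := subset_toMeasurable μ {s | f s ≠ g s}
  generalize toMeasurable μ {s | f s ≠ g s} = N at *
  have : ∀ᵐ t : (Fin d → ℝ), ∀ᵐ s ∂μ, φ t s ∈ Nᶜ := by
    refine Eventually.of_forall fun t => ?_
    exact (h.qmp t).ae (compl_mem_ae_iff.2 hN)
  rw [Measure.ae_ae_comm (p := fun t s => φ t s ∈ Nᶜ) (h.joint hm.compl)] at this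
  filter_upwards [this] with s h1
  filter_upwards [h1] with t h2
  by_contra h3
  exact h2 (hs h3)

lemma lintD (h : Sys μ d φ w) (D : Set (Fin d → ℝ)) (f : S → ℝ)
    (hf : Measurable f) :
    ∫⁻ s, (∫⁻ t in D, ‖w t s * f (φ t s)‖ₑ) ∂μ = volume D * ∫⁻ s, ‖f s‖ₑ ∂μ := by
  rw [lintegral_lintegral_swap]
  · have : ∀ t, ∫⁻ s, ‖w t s * f (φ t s)‖ₑ ∂μ = ∫⁻ s, ‖f s‖ₑ ∂μ := fun t => by
      rw [← h.lint t _ hf.enorm]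
      simp [enorm_mul, Real.enorm_of_nonneg (h.wpos t _).le]
    simp only [this, lintegral_const, Measure.restrict_apply_univ, mul_comm]
  · apply Measurable.aemeasurable
    have := (h.wjoint.mul (hf.comp h.joint)).enorm
    exact this.comp measurable_swap

lemma mF (h : Sys μ d φ w) (f : S → ℝ) (hf : Measurable f) :
    Measurable fun p : (Fin d → ℝ) × S => w p.1 p.2 * f (φ p.1 p.2) :=
  h.wjoint.mul (hf.comp h.joint)

lemma intD (h : Sys μ d φ w) (D : Set (Fin d → ℝ)) (hD : volume D ≠ ⊤) (f : S → ℝ)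
    (hf : Measurable f) (hfi : MemLp f 1 μ) :
    ∀ᵐ s ∂μ, IntegrableOn (fun t => w t s * f (φ t s)) D := by
  have hfin : volume D * ∫⁻ s, ‖f s‖ₑ ∂μ ≠ ⊤ := by
    refine ENNReal.mul_ne_top hD ?_
    rw [← eLpNorm_one_eq_lintegral_enorm]; exact hfi.2.ne
  rw [← h.lintD D f hf] at hfin
  have := ae_lt_top (μ := μ) (Measurable.lintegral_prod_right' (ν := volume.restrict D)
    ((h.mF f hf).comp measurable_swap).enorm) hfin
  filter_upwards [this] with s hs
  exact ⟨((h.mF f hf).comp measurable_prodMk_right).aestronglyMeasurable, hs⟩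

end Sys
namespace Sys
variable {S : Type*} [MeasurableSpace S] {μ : Measure S} [SigmaFinite μ] {d : ℕ}
    {φ : (Fin d → ℝ) → S → S} {w : (Fin d → ℝ) → S → ℝ}

def box (d : ℕ) (T : ℝ) : Set (Fin d → ℝ) := Set.univ.pi fun _ : Fin d => Set.Ioc (-T) T

lemma mbox (T : ℝ) : MeasurableSet (box d T) :=
  MeasurableSet.univ_pi fun _ => measurableSet_Ioc

lemma volbox (T : ℝ) : volume (box d T) = ENNReal.ofReal (2 * T) ^ d := by
  rw [box, volume_pi_pi]
  simp [two_mul]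

lemma volbox_ne (T : ℝ) : volume (box d T) ≠ ⊤ := by
  rw [volbox]; exact ENNReal.pow_ne_top ENNReal.ofReal_ne_top

lemma scal_le (T : ℝ) : ‖((2 * T) ^ d)⁻¹‖ₑ * volume (box d T) ≤ 1 := by
  rw [volbox]
  rcases lt_or_ge 0 T with h | h
  · have : (0:ℝ) < (2 * T) ^ d := by positivity
    rw [Real.enorm_of_nonneg (by positivity), ← ENNReal.ofReal_pow (by positivity),
      ← ENNReal.ofReal_mul (by positivity), inv_mul_cancel₀ this.ne']
    simp
  · rw [ENNReal.ofReal_of_nonpos (by linarith)]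
    rcases Nat.eq_zero_or_pos d with rfl | hd
    · simp
    · simp [hd.ne']

lemma aemA (h : Sys μ d φ w) (D : Set (Fin d → ℝ)) (f : S → ℝ)
    (hf : Measurable f) : StronglyMeasurable (fun s => ∫ t in D, w t s * f (φ t s)) :=
  StronglyMeasurable.integral_prod_right'  (ν := volume.restrict D)
    ((h.mF f hf).comp measurable_swap).stronglyMeasurable

lemma opA (h : Sys μ d φ w) (T : ℝ) : ∃ L : Lp ℝ 1 μ →L[ℝ] Lp ℝ 1 μ,
    (∀ x : Lp ℝ 1 μ, L x =ᵐ[μ] fun s => ((2 * T) ^ d)⁻¹ * ∫ t in box d T, w t s * x (φ t s))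
      ∧ ∀ x, ‖L x‖ ≤ ‖x‖ := by
  obtain ⟨L, h1, h2⟩ := mkOp (μ := μ) (p := 1) (q := 1)
    (fun f s => ((2 * T) ^ d)⁻¹ * ∫ t in box d T, w t s * f (φ t s)) 1
    (fun f g hfg => by
      filter_upwards [h.congrA f g hfg] with s hs
      congr 1
      apply integral_congr_ae
      filter_upwards [ae_restrict_of_ae hs] with t ht
      rw [ht])
    (fun f g hf hg hfi hgi => by
      filter_upwards [h.intD _ (volbox_ne T) f hf hfi, h.intD _ (volbox_ne T) g hg hgi] with s h1 h2
      simp only [Pi.add_apply, mul_add]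
      rw [integral_add h1 h2, mul_add])
    (fun c f => Eventually.of_forall fun s => by
      simp only [Pi.smul_apply, smul_eq_mul]
      rw [mul_left_comm c, ← integral_const_mul c]
      simp only [mul_left_comm c])
    (fun f hf _ => ((h.aemA _ f hf).const_mul _).aestronglyMeasurable)
    (fun f hf _ => by
      rw [eLpNorm_one_eq_lintegral_enorm, eLpNorm_one_eq_lintegral_enorm]
      simp only [enorm_mul]
      rw [lintegral_const_mul _ (h.aemA _ f hf).measurable.enorm]
      calc _ ≤ ‖((2 * T) ^ d)⁻¹‖ₑ * (volume (box d T) * ∫⁻ s, ‖f s‖ₑ ∂μ) := by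
            rw [← h.lintD _ f hf]
            gcongr
            exact enorm_integral_le_lintegral_enorm _
        _ ≤ 1 * ∫⁻ s, ‖f s‖ₑ ∂μ := by
            rw [← mul_assoc]
            gcongr
            exact scal_le T
        _ = _ := by simp)
  exact ⟨L, h1, by simpa using h2⟩

/-- shift identity -/
lemma shift (h : Sys μ d φ w) (D : Set (Fin d → ℝ)) (f : S → ℝ) (u) (s) :
    w u s * (∫ t in D, w t (φ u s) * f (φ t (φ u s))) =
      ∫ t in (fun t => t + u) '' D, w t s * f (φ t s) := by
  rw [(MeasurePreserving.setIntegral_image_emb (measurePreserving_add_right volume u)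
    (measurableEmbedding_addRight u)), ← integral_const_mul]
  simp only [h.wcoc, h.hcomp, mul_assoc]

lemma shift' (h : Sys μ d φ w) (D : Set (Fin d → ℝ)) (f : S → ℝ) (u) (s) :
    w u s * (∫ t in D, w t (φ u s) * f (φ t (φ u s))) =
      ∫ t in D, w t s * (w u (φ t s) * f (φ u (φ t s))) := by
  rw [← integral_const_mul]
  congr 1
  ext t
  rw [← mul_assoc, ← mul_assoc, ← h.wcoc, ← h.wcoc, ← h.hcomp, ← h.hcomp, add_comm]

lemma diffD {F : (Fin d → ℝ) → ℝ} {D E B C : Set (Fin d → ℝ)} (hCD : C ⊆ D) (hCE : C ⊆ E)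
    (hDB : D ⊆ B) (hEB : E ⊆ B) (hB : MeasurableSet B)
    (hC : MeasurableSet C) (hD : MeasurableSet D) (hE : MeasurableSet E)
    (hF : IntegrableOn F B) :
    ‖(∫ t in D, F t) - ∫ t in E, F t‖ₑ ≤ ∫⁻ t in B \ C, ‖F t‖ₑ := by
  rw [← integral_indicator hD, ← integral_indicator hE, ← integral_sub
    ((hF.mono_set hDB).integrable_indicator hD) ((hF.mono_set hEB).integrable_indicator hE),
    ← lintegral_indicator (hB.diff hC)]
  refine (enorm_integral_le_lintegral_enorm _).trans (lintegral_mono fun t => ?_)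
  by_cases h1 : t ∈ C
  · simp [h1, hCD h1, hCE h1]
  by_cases h2 : t ∈ B
  · simp only [Set.indicator, Set.mem_sdiff, h1, h2, not_false_eq_true, and_self, if_true]
    split_ifs <;> simp
  · have h3 : t ∉ D := fun h => h2 (hDB h)
    have h4 : t ∉ E := fun h => h2 (hEB h)
    simp [h3, h4]

lemma tend (d : ℕ) (M : ℝ) : Tendsto (fun T : ℝ => ((2 * T) ^ d)⁻¹ *
    ((2 * (T + M)) ^ d - (2 * (T - M)) ^ d)) atTop (nhds 0) := by
  have h0 : Tendsto (fun T : ℝ => M / T) atTop (nhds 0) := tendsto_const_nhds.div_atTop tendsto_id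
  have h1 : Tendsto (fun T : ℝ => (1 + M / T) ^ d - (1 - M / T) ^ d) atTop (nhds 0) := by
    have := ((h0.const_add 1).pow d).sub ((h0.const_sub 1).pow d)
    simpa using this
  refine h1.congr' ?_
  filter_upwards [eventually_gt_atTop 0] with T hT
  have e1 : 2 * (T + M) = (2 * T) * (1 + M / T) := by field_simp
  have e2 : 2 * (T - M) = (2 * T) * (1 - M / T) := by field_simp
  have : (2 * T) ^ d ≠ 0 := by positivity
  rw [e1, e2, mul_pow (2 * T), mul_pow (2 * T), ← mul_sub, ← mul_assoc, inv_mul_cancel₀ this, one_mul]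

lemma estA (h : Sys μ d φ w) (T : ℝ) (u : Fin d → ℝ) (hT : ‖u‖ < T) (f : S → ℝ)
    (hf : Measurable f) (hfi : MemLp f 1 μ) :
    ∫⁻ s, ‖w u s * (((2 * T) ^ d)⁻¹ * ∫ t in box d T, w t (φ u s) * f (φ t (φ u s))) -
      ((2 * T) ^ d)⁻¹ * ∫ t in box d T, w t s * f (φ t s)‖ₑ ∂μ ≤
    ENNReal.ofReal (((2 * T) ^ d)⁻¹ * ((2 * (T + ‖u‖)) ^ d - (2 * (T - ‖u‖)) ^ d)) *
      ∫⁻ s, ‖f s‖ₑ ∂μ := by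
  have hu := norm_nonneg u
  have hTp : 0 < T := by linarith
  have hui : ∀ i, |u i| ≤ ‖u‖ := fun i => norm_le_pi_norm u i
  have hvol : volume (box d (T + ‖u‖) \ box d (T - ‖u‖)) =
      ENNReal.ofReal ((2 * (T + ‖u‖)) ^ d - (2 * (T - ‖u‖)) ^ d) := by
    rw [measure_sdiff _ (mbox _).nullMeasurableSet (volbox_ne _), volbox, volbox,
      ENNReal.ofReal_sub _ (by have : 0 ≤ T - ‖u‖ := by linarith
                               positivity), ENNReal.ofReal_pow (by positivity),
        ENNReal.ofReal_pow (by linarith)]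
    exact Set.pi_mono fun i _ => Set.Ioc_subset_Ioc (by linarith) (by linarith)
  rw [ENNReal.ofReal_mul (by positivity), mul_assoc, ← hvol, ← h.lintD _ f hf,
    ← lintegral_const_mul' _ _ (by simp)]
  refine lintegral_mono_ae ?_
  filter_upwards [h.intD _ (volbox_ne (T + ‖u‖)) f hf hfi] with s hs
  rw [mul_left_comm, ← mul_sub, h.shift, enorm_mul, Real.enorm_of_nonneg (by positivity)]
  gcongr
  refine diffD ?_ ?_ ?_ ?_ (mbox _) (mbox _) ?_ (mbox _) hs
  · intro t ht
    refine ⟨t - u, fun i _ => ?_, by simp⟩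
    have := ht i trivial
    have := abs_le.1 (hui i)
    simp only [Set.mem_Ioc, Pi.sub_apply] at *
    constructor <;> linarith
  · exact Set.pi_mono fun i _ => Set.Ioc_subset_Ioc (by linarith) (by linarith)
  · rintro _ ⟨t, ht, rfl⟩ i -
    have := ht i trivial
    have := abs_le.1 (hui i)
    simp only [Set.mem_Ioc, Pi.add_apply] at *
    constructor <;> linarith
  · exact Set.pi_mono fun i _ => Set.Ioc_subset_Ioc (by linarith) (by linarith)
  · exact (measurableEmbedding_addRight u).measurableSet_image.2 (mbox _)

end Sys
section abstractPart

lemma cauchy_closed {E : Type*} [NormedAddCommGroup E] [NormedSpace ℝ E]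
    (A : ℝ → E →L[ℝ] E) (hA : ∀ T x, ‖A T x‖ ≤ ‖x‖) :
    ∃ C : Submodule ℝ E, IsClosed (C : Set E) ∧ ∀ x, x ∈ C ↔ CauchySeq (fun T => A T x) := by
  refine ⟨{ carrier := {x | CauchySeq (fun T => A T x)}
            add_mem' := ?_
            zero_mem' := ?_
            smul_mem' := ?_ }, ?_, fun x => Iff.rfl⟩
  · intro x y hx hy
    simp only [Set.mem_ofPred_eq, map_add] at *
    exact hx.add hy
  · simp only [Set.mem_ofPred_eq, map_zero]
    exact cauchySeq_const 0
  · intro c x hx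
    simp only [Set.mem_ofPred_eq, map_smul] at *
    exact (uniformContinuous_const_smul c).comp_cauchySeq hx
  · refine isClosed_of_closure_subset fun x hx => ?_
    rw [Metric.mem_closure_iff] at hx
    refine Metric.cauchySeq_iff'.2 fun ε hε => ?_
    obtain ⟨y, hy, hxy⟩ := hx (ε / 3) (by positivity)
    obtain ⟨N, hN⟩ := Metric.cauchySeq_iff'.1 (show CauchySeq (fun T => A T y) from hy) (ε / 3)
      (by positivity)
    refine ⟨N, fun n hn => ?_⟩
    have h1 : ∀ T, dist (A T x) (A T y) < ε / 3 := fun T => by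
      rw [dist_eq_norm, ← map_sub]
      rw [dist_eq_norm] at hxy
      exact (hA _ _).trans_lt hxy
    have h2 := hN n hn
    have h3 := h1 n
    have h4 := h1 N
    rw [dist_comm] at h4
    have := dist_triangle4 (A n x) (A n y) (A N y) (A N x)
    linarith

lemma sqmem {S : Type*} [MeasurableSpace S] {μ : Measure S} (x : Lp ℝ 1 μ) :
    MemLp (fun s => √(x s)) 2 μ := by
  rw [memLp_two_iff_integrable_sq (Lp.stronglyMeasurable x).measurable.sqrt.aestronglyMeasurable]
  refine (L1.integrable_coeFn x).mono
    ((Lp.stronglyMeasurable x).measurable.sqrt.pow_const 2).aestronglyMeasurable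
    (Eventually.of_forall fun s => ?_)
  rcases le_total 0 (x s) with h | h
  · rw [Real.sq_sqrt h]
  · simp [Real.sqrt_eq_zero_of_nonpos h]

lemma sqrt_diff (a b : ℝ) : (√a - √b) * (√a - √b) ≤ ‖a - b‖ := by
  wlog hab : b ≤ a generalizing a b
  · have := this b a (by linarith)
    rw [norm_sub_rev]
    linarith
  rw [Real.norm_of_nonneg (by linarith)]
  have h1 := Real.sqrt_le_sqrt hab
  have h2 := Real.sqrt_nonneg b
  rcases le_total 0 b with hb | hb
  · nlinarith [Real.mul_self_sqrt hb, Real.mul_self_sqrt (hb.trans hab)]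
  · rw [Real.sqrt_eq_zero_of_nonpos hb]
    rcases le_total 0 a with ha | ha
    · nlinarith [Real.mul_self_sqrt ha]
    · rw [Real.sqrt_eq_zero_of_nonpos ha]; simpa using hab

lemma sq_norm {S : Type*} [MeasurableSpace S] {μ : Measure S} (x y : Lp ℝ 1 μ) :
    ‖(sqmem x).toLp - (sqmem y).toLp‖ ^ 2 ≤ ‖x - y‖ := by
  rw [← real_inner_self_eq_norm_sq, L2.inner_def, L1.norm_eq_integral_norm]
  refine integral_mono_ae (L2.integrable_inner _ _) (L1.integrable_coeFn _).norm ?_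
  filter_upwards [Lp.coeFn_sub (sqmem x).toLp (sqmem y).toLp, Lp.coeFn_sub x y,
    (sqmem x).coeFn_toLp, (sqmem y).coeFn_toLp] with s h1 h2 h3 h4
  rw [h1, h2, Pi.sub_apply, Pi.sub_apply, h3, h4]
  exact sqrt_diff _ _

lemma opM {S : Type*} [MeasurableSpace S] {μ : Measure S} (v : Lp ℝ 2 μ) :
    ∃ L : Lp ℝ 2 μ →L[ℝ] Lp ℝ 1 μ, (∀ x : Lp ℝ 2 μ, L x =ᵐ[μ] fun s => v s * x s) := by
  obtain ⟨L, h1, -⟩ := mkOp (μ := μ) (p := 2) (q := 1) (fun f s => v s * f s) ‖v‖₊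
    (fun f g hfg => by
      filter_upwards [hfg] with s hs
      rw [hs])
    (fun f g _ _ _ _ => Eventually.of_forall fun s => by simp [mul_add])
    (fun c f => Eventually.of_forall fun s => by simp [mul_left_comm])
    (fun f hf _ => ((Lp.stronglyMeasurable v).measurable.mul hf).aestronglyMeasurable)
    (fun f hf hfm => by
      have := eLpNorm_smul_le_mul_eLpNorm (p := 2) (q := 2) (r := 1) hfm.1 (Lp.aestronglyMeasurable v)
      refine this.trans_eq ?_
      congr 1
      rw [← Lp.enorm_def]
      rfl)
  exact ⟨L, h1⟩

end abstractPart

namespace Sys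
variable {S : Type*} [MeasurableSpace S] {μ : Measure S} [SigmaFinite μ] {d : ℕ}
    {φ : (Fin d → ℝ) → S → S} {w : (Fin d → ℝ) → S → ℝ}

lemma estOp (h : Sys μ d φ w) (U A : _ → Lp ℝ 1 μ →L[ℝ] Lp ℝ 1 μ)
    (hU : ∀ t, ∀ x : Lp ℝ 1 μ, U t x =ᵐ[μ] fun s => w t s * x (φ t s))
    (hA : ∀ T, ∀ x : Lp ℝ 1 μ,
      A T x =ᵐ[μ] fun s => ((2 * T) ^ d)⁻¹ * ∫ t in box d T, w t s * x (φ t s))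
    (u : Fin d → ℝ) (x : Lp ℝ 1 μ) :
    Tendsto (fun T => ‖U u (A T x) - A T x‖) atTop (nhds 0) := by
  have h1 := (tend d ‖u‖).mul_const ‖x‖
  rw [zero_mul] at h1
  refine squeeze_zero' (Eventually.of_forall fun _ => norm_nonneg _) ?_ h1
  filter_upwards [eventually_gt_atTop ‖u‖] with T hT
  have hm := (Lp.stronglyMeasurable x).measurable
  have h2 := h.estA T u hT x hm (Lp.memLp x)
  have hu := norm_nonneg u
  have hnn : 0 ≤ (((2 * T) ^ d)⁻¹ * ((2 * (T + ‖u‖)) ^ d - (2 * (T - ‖u‖)) ^ d)) := by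
    have h3 : (2 * (T - ‖u‖)) ^ d ≤ (2 * (T + ‖u‖)) ^ d :=
      pow_le_pow_left₀ (by linarith) (by linarith) d
    have : 0 < T := by linarith
    exact mul_nonneg (by positivity) (by linarith)
  rw [Lp.norm_def, Lp.norm_def, eLpNorm_one_eq_lintegral_enorm, eLpNorm_one_eq_lintegral_enorm,
    ← ENNReal.toReal_ofReal hnn, ← ENNReal.toReal_mul]
  refine ENNReal.toReal_mono (ENNReal.mul_ne_top ENNReal.ofReal_ne_top ?_) (le_trans (le_of_eq ?_) h2)
  · rw [← eLpNorm_one_eq_lintegral_enorm]; exact (Lp.memLp x).2.ne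
  · apply lintegral_congr_ae
    filter_upwards [Lp.coeFn_sub (U u (A T x)) (A T x), hU u (A T x), hA T x,
      (h.qmp u).ae_eq_comp (hA T x)] with s h3 h4 h5 h6
    simp only [Function.comp_apply] at h6
    rw [h3, Pi.sub_apply, h4, h5, h6]

lemma commOp (h : Sys μ d φ w) (U A : _ → Lp ℝ 1 μ →L[ℝ] Lp ℝ 1 μ)
    (hU : ∀ t, ∀ x : Lp ℝ 1 μ, U t x =ᵐ[μ] fun s => w t s * x (φ t s))
    (hA : ∀ T, ∀ x : Lp ℝ 1 μ,
      A T x =ᵐ[μ] fun s => ((2 * T) ^ d)⁻¹ * ∫ t in box d T, w t s * x (φ t s))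
    (u : Fin d → ℝ) (T : ℝ) (x : Lp ℝ 1 μ) : A T (U u x) = U u (A T x) := by
  apply Lp.ext
  filter_upwards [hA T (U u x), hU u (A T x), h.congrA _ _ (hU u x),
      (h.qmp u).ae_eq_comp (hA T x)] with s h1 h2 h3 h4
  simp only [Function.comp_apply] at h4
  rw [h1, h2, h4, mul_left_comm, h.shift']
  congr 1
  apply integral_congr_ae
  filter_upwards [ae_restrict_of_ae h3] with t ht
  rw [ht]

lemma invOp (h : Sys μ d φ w) (U A : _ → Lp ℝ 1 μ →L[ℝ] Lp ℝ 1 μ)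
    (hU : ∀ t, ∀ x : Lp ℝ 1 μ, U t x =ᵐ[μ] fun s => w t s * x (φ t s))
    (hA : ∀ T, ∀ x : Lp ℝ 1 μ,
      A T x =ᵐ[μ] fun s => ((2 * T) ^ d)⁻¹ * ∫ t in box d T, w t s * x (φ t s))
    (T : ℝ) (hT : 0 < T) (x : Lp ℝ 1 μ) (hx : ∀ t, U t x = x) : A T x = x := by
  have hm := (Lp.stronglyMeasurable x).measurable
  have h1 : ∀ᵐ t : (Fin d → ℝ), ∀ᵐ s ∂μ, w t s * x (φ t s) = x s := by
    refine Eventually.of_forall fun t => ?_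
    filter_upwards [hU t x] with s hs
    rw [← hs, hx]
  rw [Measure.ae_ae_comm (p := fun t s => w t s * x (φ t s) = x s)
    (measurableSet_eq_fun (h.mF x hm) (hm.comp measurable_snd))] at h1
  apply Lp.ext
  filter_upwards [hA T x, h1] with s h2 h3
  rw [h2, integral_congr_ae (ae_restrict_of_ae h3), setIntegral_const, Measure.real, volbox,
    ENNReal.toReal_pow, ENNReal.toReal_ofReal (by positivity), smul_eq_mul, ← mul_assoc,
    inv_mul_cancel₀ (by positivity), one_mul]

end Sys
def NN {E ι : Type*} [NormedAddCommGroup E] [InnerProductSpace ℝ E]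
    (V : ι → E →L[ℝ] E) : Submodule ℝ E :=
  (Submodule.span ℝ (Set.range fun p : ι × E => V p.1 p.2 - p.2)).topologicalClosure

lemma NN_gen {E ι : Type*} [NormedAddCommGroup E] [InnerProductSpace ℝ E]
    (V : ι → E →L[ℝ] E) (t : ι) (j : E) : V t j - j ∈ NN V :=
  Submodule.le_topologicalClosure _ (Submodule.subset_span ⟨(t, j), rfl⟩)

lemma NN_le {E ι : Type*} [NormedAddCommGroup E] [InnerProductSpace ℝ E]
    (V : ι → E →L[ℝ] E) (C : Submodule ℝ E) (hC : IsClosed (C : Set E))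
    (h : ∀ t j, V t j - j ∈ C) : NN V ≤ C := by
  refine Submodule.topologicalClosure_minimal _ (Submodule.span_le.2 ?_) hC
  rintro _ ⟨p, rfl⟩
  exact h _ _

lemma inner_isom {E : Type*} [NormedAddCommGroup E] [InnerProductSpace ℝ E]
    (V : E →L[ℝ] E) (hV : ∀ x, ‖V x‖ = ‖x‖) (x y : E) : inner ℝ (V x) (V y) = inner ℝ x y :=
  LinearIsometry.inner_map_map ⟨V.toLinearMap, hV⟩ x y

lemma NN_orth {E ι : Type*} [NormedAddCommGroup E] [InnerProductSpace ℝ E]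
    (V : ι → E →L[ℝ] E) (hV : ∀ t x, ‖V t x‖ = ‖x‖) (q : E) :
    q ∈ (NN V)ᗮ ↔ ∀ t, V t q = q := by
  constructor
  · intro hq t
    have h1 : inner ℝ (V t q - q) q = 0 := (Submodule.mem_orthogonal _ _).1 hq _ (NN_gen V t q)
    rw [inner_sub_left] at h1
    have h2 := norm_sub_sq_real (V t q) q
    rw [hV, sub_eq_zero.1 h1, real_inner_self_eq_norm_sq] at h2
    have h3 : ‖V t q - q‖ = 0 := by nlinarith
    exact sub_eq_zero.1 (norm_eq_zero.1 h3)
  · intro hq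
    have : NN V ≤ (ℝ ∙ q)ᗮ := by
      refine NN_le V _ (Submodule.isClosed_orthogonal _) fun t j => ?_
      rw [Submodule.mem_orthogonal_singleton_iff_inner_right, inner_sub_right, sub_eq_zero]
      conv_lhs => rw [← hq t]
      exact inner_isom _ (hV t) _ _
    rw [Submodule.mem_orthogonal]
    intro u hu
    exact Submodule.mem_orthogonal_singleton_iff_inner_left.1 (this hu)

namespace Sys
variable {S : Type*} [MeasurableSpace S] {μ : Measure S} [SigmaFinite μ] {d : ℕ}
    {φ : (Fin d → ℝ) → S → S} {w : (Fin d → ℝ) → S → ℝ}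

lemma exv (h : Sys μ d φ w) (V : (Fin d → ℝ) → Lp ℝ 2 μ →L[ℝ] Lp ℝ 2 μ)
    (hV : ∀ t, ∀ x : Lp ℝ 2 μ, V t x =ᵐ[μ] fun s => √(w t s) * x (φ t s))
    (hVn : ∀ t x, ‖V t x‖ = ‖x‖) :
    ∃ v : Lp ℝ 2 μ, (∀ t, V t v = v) ∧
      ∀ q : Lp ℝ 2 μ, (∀ t, V t q = q) → ∀ᵐ s ∂μ, v s = 0 → q s = 0 := by
  obtain ⟨g, gpos, gm, gint⟩ := exists_pos_lintegral_lt_of_sigmaFinite μ one_ne_zero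
  have hgm : Measurable fun s => √(g s : ℝ) := gm.coe_nnreal_real.sqrt
  have hgL : MemLp (fun s => √(g s : ℝ)) 2 μ := by
    rw [memLp_two_iff_integrable_sq hgm.aestronglyMeasurable]
    simp only [NNReal.coe_nonneg, Real.sq_sqrt]
    refine ⟨gm.coe_nnreal_real.aestronglyMeasurable, ?_⟩
    rw [HasFiniteIntegral]
    simpa using gint.trans ENNReal.one_lt_top
  let p : Lp ℝ 2 μ := hgL.toLp
  have : CompleteSpace (NN V) := (Submodule.isClosed_topologicalClosure _).completeSpace_coe
  let v := p - (NN V).starProjection p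
  have hv : v ∈ (NN V)ᗮ := Submodule.sub_starProjection_mem_orthogonal p
  have hvi := (NN_orth V hVn v).1 hv
  refine ⟨v, hvi, fun q hq => ?_⟩
  have vm : Measurable (v : S → ℝ) := (Lp.stronglyMeasurable v).measurable
  have hms : MeasurableSet {s | v s = 0} := vm (measurableSet_singleton 0)
  have hq'L : MemLp ({s | v s = 0}.indicator fun s => |q s|) 2 μ :=
    (Lp.memLp q).abs.indicator hms
  let q' : Lp ℝ 2 μ := hq'L.toLp
  have hq'i : ∀ t, V t q' = q' := by
    intro t
    apply Lp.ext
    have e1 := hV t q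
    have e2 := hV t v
    rw [hq t] at e1
    rw [hvi t] at e2
    filter_upwards [hV t q', hq'L.coeFn_toLp, (h.qmp t).ae_eq_comp hq'L.coeFn_toLp, e1, e2]
      with s h1 h2 h3 h4 h5
    simp only [Function.comp_apply] at h3
    have hw : 0 < √(w t s) := Real.sqrt_pos.2 (h.wpos t s)
    change _ = hq'L.toLp _ s
    rw [h1, h2]
    change _ * hq'L.toLp _ (φ t s) = _
    rw [h3]
    simp only [Set.indicator, Set.mem_ofPred_eq]
    rw [h4, h5]
    by_cases h0 : v (φ t s) = 0
    · simp [h0, abs_mul, abs_of_pos hw]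
    · simp [h0, hw.ne']
  have hq'o := (NN_orth V hVn q').2 hq'i
  have e1 : inner ℝ q' p = 0 := by
    have : p = v + (NN V).starProjection p := by simp [v]
    rw [this, inner_add_right, real_inner_comm,
      real_inner_comm _ q', (Submodule.mem_orthogonal _ _).1 hq'o _
      (Submodule.starProjection_apply_mem _ _), add_zero, L2.inner_def]
    apply integral_eq_zero_of_ae
    filter_upwards [hq'L.coeFn_toLp] with s hs
    change inner ℝ (v s) (hq'L.toLp _ s) = 0
    rw [hs]
    by_cases h0 : v s = 0 <;> simp [h0]
  have e2 : (fun s => inner ℝ (q' s) (p s)) =ᵐ[μ] 0 := by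
    refine (integral_eq_zero_iff_of_nonneg_ae ?_ (L2.integrable_inner q' p)).1 e1
    filter_upwards [hq'L.coeFn_toLp, hgL.coeFn_toLp] with s h1 h2
    change 0 ≤ inner ℝ (hq'L.toLp _ s) (hgL.toLp _ s)
    rw [h1, h2]
    have : 0 ≤ {s | v s = 0}.indicator (fun s => |q s|) s :=
      Set.indicator_nonneg (fun _ _ => abs_nonneg _) _
    exact mul_nonneg (Real.sqrt_nonneg _) this
  filter_upwards [hq'L.coeFn_toLp, hgL.coeFn_toLp, e2] with s h1 h2 h3 h4
  change inner ℝ (hq'L.toLp _ s) (hgL.toLp _ s) = 0 at h3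
  have hpos : (0:ℝ) < g s := gpos s
  rw [h1, h2] at h3
  simpa [h4, (Real.sqrt_pos.2 hpos).ne', (gpos s).ne'] using h3

/-- null part: weak convergence -/
lemma nullPart (h : Sys μ d φ w) (U A : _ → Lp ℝ 1 μ →L[ℝ] Lp ℝ 1 μ)
    (hU : ∀ t, ∀ x : Lp ℝ 1 μ, U t x =ᵐ[μ] fun s => w t s * x (φ t s))
    (hA : ∀ T, ∀ x : Lp ℝ 1 μ,
      A T x =ᵐ[μ] fun s => ((2 * T) ^ d)⁻¹ * ∫ t in box d T, w t s * x (φ t s))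
    (hAn : ∀ T x, ‖A T x‖ ≤ ‖x‖)
    (V : (Fin d → ℝ) → Lp ℝ 2 μ →L[ℝ] Lp ℝ 2 μ)
    (hV : ∀ t, ∀ x : Lp ℝ 2 μ, V t x =ᵐ[μ] fun s => √(w t s) * x (φ t s))
    (hVn : ∀ t x, ‖V t x‖ = ‖x‖) (x : Lp ℝ 1 μ) (n : Lp ℝ 2 μ) (hn : n ∈ NN V) :
    Tendsto (fun T => inner ℝ n (sqmem (A T x)).toLp) atTop (nhds 0) := by
  have hVU : ∀ t (y : Lp ℝ 1 μ), V t (sqmem y).toLp = (sqmem (U t y)).toLp := by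
    intro t y
    apply Lp.ext
    filter_upwards [hV t (sqmem y).toLp, (h.qmp t).ae_eq_comp (sqmem y).coeFn_toLp,
      (sqmem (U t y)).coeFn_toLp, hU t y] with s h1 h2 h3 h4
    simp only [Function.comp_apply] at h2
    rw [h1, h2, h3, h4, Real.sqrt_mul (h.wpos t s).le]
  have hbd : ∀ T, ‖(sqmem (A T x)).toLp‖ ≤ √‖x‖ := by
    intro T
    apply Real.le_sqrt_of_sq_le
    have h0 := sq_norm (A T x) 0
    have h1 : (sqmem (0 : Lp ℝ 1 μ)).toLp = 0 := by
      apply Lp.ext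
      filter_upwards [(sqmem (0 : Lp ℝ 1 μ)).coeFn_toLp, Lp.coeFn_zero ℝ 1 μ,
        Lp.coeFn_zero ℝ 2 μ] with s h1 h2 h3
      rw [h1, h2, h3]; simp
    rw [h1, sub_zero, sub_zero] at h0
    exact h0.trans (hAn _ _)
  have hdiff : ∀ t, Tendsto (fun T => ‖V t (sqmem (A T x)).toLp - (sqmem (A T x)).toLp‖)
      atTop (nhds 0) := by
    intro t
    have h1 := (h.estOp U A hU hA t x).sqrt
    rw [Real.sqrt_zero] at h1
    refine squeeze_zero (fun _ => norm_nonneg _) (fun T => ?_) h1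
    apply Real.le_sqrt_of_sq_le
    rw [hVU]
    exact sq_norm _ _
  let C : Submodule ℝ (Lp ℝ 2 μ) :=
    { carrier := {n | Tendsto (fun T => inner ℝ n (sqmem (A T x)).toLp) atTop (nhds 0)}
      add_mem' := by
        intro a b ha hb
        simp only [Set.mem_ofPred_eq, inner_add_left] at *
        simpa using ha.add hb
      zero_mem' := by simp
      smul_mem' := by
        intro c a ha
        simp only [Set.mem_ofPred_eq, inner_smul_left] at *
        simpa using ha.const_mul c }
  refine NN_le V C ?_ ?_ hn
  · refine isClosed_of_closure_subset fun a ha => ?_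
    rw [Metric.mem_closure_iff] at ha
    refine Metric.tendsto_atTop.2 fun ε hε => ?_
    have hx0 := Real.sqrt_nonneg ‖x‖
    obtain ⟨b, hb, hab⟩ := ha (ε / 2 / (√‖x‖ + 1)) (by positivity)
    obtain ⟨M, hM⟩ := Metric.tendsto_atTop.1
      (show Tendsto (fun T => inner ℝ b (sqmem (A T x)).toLp) atTop (nhds 0) from hb) (ε / 2)
      (by positivity)
    refine ⟨M, fun T hT => ?_⟩
    have h1 := hM T hT
    rw [dist_zero_right] at h1 ⊢
    have h2 : inner ℝ a (sqmem (A T x)).toLp = inner ℝ (a - b) (sqmem (A T x)).toLp +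
      inner ℝ b (sqmem (A T x)).toLp := by rw [← inner_add_left, sub_add_cancel]
    rw [h2]
    have h3 : ‖inner ℝ (a - b) (sqmem (A T x)).toLp‖ ≤ ε / 2 := by
      refine (norm_inner_le_norm _ _).trans ?_
      rw [dist_eq_norm, lt_div_iff₀ (by positivity)] at hab
      refine le_trans ?_ hab.le
      gcongr
      exact (hbd T).trans (by linarith)
    have := norm_add_le (inner ℝ (a - b) (sqmem (A T x)).toLp) (inner ℝ b (sqmem (A T x)).toLp)
    linarith
  · intro t j
    change Tendsto _ _ _
    have h1 := ((hdiff t).const_mul ‖V t j‖)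
    rw [mul_zero] at h1
    refine squeeze_zero_norm (fun T => ?_) h1
    have : inner ℝ (V t j - j) (sqmem (A T x)).toLp =
        - inner ℝ (V t j) (V t (sqmem (A T x)).toLp - (sqmem (A T x)).toLp) := by
      rw [inner_sub_left, inner_sub_right, inner_isom _ (hVn t)]
      ring
    rw [this, norm_neg]
    exact norm_inner_le_norm _ _

end Sys
namespace Sys
variable {S : Type*} [MeasurableSpace S] {μ : Measure S} [SigmaFinite μ] {d : ℕ}
    {φ : (Fin d → ℝ) → S → S} {w : (Fin d → ℝ) → S → ℝ}

lemma posPart (h : Sys μ d φ w) (U A : _ → Lp ℝ 1 μ →L[ℝ] Lp ℝ 1 μ)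
    (hU : ∀ t, ∀ x : Lp ℝ 1 μ, U t x =ᵐ[μ] fun s => w t s * x (φ t s))
    (hA : ∀ T, ∀ x : Lp ℝ 1 μ,
      A T x =ᵐ[μ] fun s => ((2 * T) ^ d)⁻¹ * ∫ t in box d T, w t s * x (φ t s))
    (hAn : ∀ T x, ‖A T x‖ ≤ ‖x‖)
    (V : (Fin d → ℝ) → Lp ℝ 2 μ →L[ℝ] Lp ℝ 2 μ)
    (hV : ∀ t, ∀ x : Lp ℝ 2 μ, V t x =ᵐ[μ] fun s => √(w t s) * x (φ t s))
    (hVn : ∀ t x, ‖V t x‖ = ‖x‖) (v : Lp ℝ 2 μ) (hv : ∀ t, V t v = v)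
    (x : Lp ℝ 1 μ) (hx : ∀ᵐ s ∂μ, v s = 0 → x s = 0) :
    ∃ y, Tendsto (fun T => A T x) atTop (nhds y) ∧ ∀ t, U t y = y := by
  obtain ⟨C, hCc, hC⟩ := cauchy_closed A hAn
  obtain ⟨M, hM⟩ := opM v
  have hMV : ∀ t k, M (V t k) = U t (M k) := by
    intro t k
    apply Lp.ext
    have e := hV t v
    rw [hv] at e
    filter_upwards [e, hM (V t k), hU t (M k), (h.qmp t).ae_eq_comp (hM k), hV t k]
      with s h1 h2 h3 h4 h5
    simp only [Function.comp_apply] at h4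
    rw [h2, h3, h4, h5, h1]
    have := Real.mul_self_sqrt (h.wpos t s).le
    linear_combination (v (φ t s) * k (φ t s)) * this
  have hMC : ∀ k, M k ∈ C := by
    have h1 : NN V ≤ C.comap (M : Lp ℝ 2 μ →ₗ[ℝ] Lp ℝ 1 μ) := by
      refine NN_le V _ (hCc.preimage M.continuous) fun t j => ?_
      change M (V t j - j) ∈ C
      rw [hC, map_sub, hMV]
      have : Tendsto (fun T => A T (U t (M j) - M j)) atTop (nhds 0) := by
        rw [tendsto_zero_iff_norm_tendsto_zero]
        simp only [map_sub, h.commOp U A hU hA]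
        exact h.estOp U A hU hA t (M j)
      exact this.cauchySeq
    intro k
    have : CompleteSpace (NN V) := (Submodule.isClosed_topologicalClosure _).completeSpace_coe
    have e : k = (NN V).starProjection k + (k - (NN V).starProjection k) := by simp
    rw [e, map_add]
    refine C.add_mem (h1 (Submodule.starProjection_apply_mem _ _)) ?_
    have hq := (NN_orth V hVn _).1 (Submodule.sub_starProjection_mem_orthogonal (K := NN V) k)
    generalize k - (NN V).starProjection k = q at hq
    rw [hC]
    have : Tendsto (fun T => A T (M q)) atTop (nhds (M q)) := by
      refine tendsto_const_nhds.congr' ?_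
      filter_upwards [eventually_gt_atTop 0] with T hT
      rw [h.invOp U A hU hA T hT (M q) fun t => by rw [← hMV, hq]]
    exact this.cauchySeq
  have hxm := (Lp.stronglyMeasurable x).measurable
  have hvm := (Lp.stronglyMeasurable v).measurable
  have hxC : x ∈ C := by
    let E : ℕ → Set S := fun n => {s | |x s| ≤ n * (v s) ^ 2}
    have hE : ∀ n, MeasurableSet (E n) := fun n =>
      measurableSet_le hxm.abs ((hvm.pow_const 2).const_mul _)
    have hk : ∀ n, MemLp ((E n).indicator fun s => x s / v s) 2 μ := by
      intro n
      refine MemLp.mono ((Lp.memLp v).const_mul (n : ℝ))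
        ((hxm.div hvm).indicator (hE n)).aestronglyMeasurable (Eventually.of_forall fun s => ?_)
      by_cases hs : s ∈ E n
      · rw [Set.indicator_of_mem hs, norm_div, norm_mul]
        by_cases h0 : v s = 0
        · simp [h0]
        · rw [div_le_iff₀ (norm_pos_iff.2 h0)]
          have h1 : |x s| ≤ n * (v s) ^ 2 := hs
          rw [← sq_abs] at h1
          simp only [Real.norm_eq_abs, Nat.abs_cast]
          linarith
      · rw [Set.indicator_of_notMem hs, norm_zero]; positivity
    have hMk : ∀ n, M (hk n).toLp =ᵐ[μ] (E n).indicator x := by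
      intro n
      filter_upwards [hM (hk n).toLp, (hk n).coeFn_toLp, hx] with s h1 h2 h3
      rw [h1, h2]
      by_cases hs : s ∈ E n
      · simp only [Set.indicator_of_mem hs]
        by_cases h0 : v s = 0
        · simp [h0, h3 h0]
        · field_simp
      · simp [Set.indicator_of_notMem hs]
    have hlim : Tendsto (fun n => M (hk n).toLp) atTop (nhds x) := by
      rw [tendsto_iff_norm_sub_tendsto_zero]
      simp only [L1.norm_eq_integral_norm]
      have h0 : ∀ n, (∫ s, ‖(M (hk n).toLp - x : Lp ℝ 1 μ) s‖ ∂μ) =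
          ∫ s, ‖(E n).indicator x s - x s‖ ∂μ := by
        intro n
        apply integral_congr_ae
        filter_upwards [hMk n, Lp.coeFn_sub (M (hk n).toLp) x] with s h1 h2
        rw [h2, Pi.sub_apply, h1]
      simp only [h0]
      have : (0:ℝ) = ∫ s, (0:ℝ) ∂μ := by simp
      rw [this]
      refine tendsto_integral_of_dominated_convergence (fun s => ‖x s‖)
        (fun n => ((hxm.indicator (hE n)).sub hxm).norm.aestronglyMeasurable)
        (L1.integrable_coeFn x).norm (fun n => Eventually.of_forall fun s => ?_) ?_
      · by_cases hs : s ∈ E n <;> simp [hs]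
      · filter_upwards [hx] with s hs
        by_cases h0 : v s = 0
        · have : ∀ n, (E n).indicator x s = 0 := fun n => by
            simp [Set.indicator, hs h0]
          simp [this, hs h0]
        · refine tendsto_const_nhds.congr' ?_
          have hp : 0 < (v s) ^ 2 := by positivity
          filter_upwards [eventually_ge_atTop ⌈|x s| / (v s) ^ 2⌉₊] with n hn
          have hmem : s ∈ E n := by
            change |x s| ≤ n * (v s) ^ 2
            rw [← div_le_iff₀ hp]
            exact Nat.ceil_le.1 hn
          simp [hmem]
    exact hCc.mem_of_tendsto hlim (Eventually.of_forall fun n => hMC _)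
  obtain ⟨y, hy⟩ := cauchySeq_tendsto_of_complete ((hC x).1 hxC)
  refine ⟨y, hy, fun t => ?_⟩
  have h1 : Tendsto (fun T => U t (A T x) - A T x) atTop (nhds (U t y - y)) :=
    (((U t).continuous.tendsto y).comp hy).sub hy
  have h2 := tendsto_zero_iff_norm_tendsto_zero.2 (h.estOp U A hU hA t x)
  exact sub_eq_zero.1 (tendsto_nhds_unique h1 h2)

lemma meas1 (F : ℝ → Lp ℝ 1 μ) (y : Lp ℝ 1 μ) (hF : Tendsto F atTop (nhds y)) (ε : ℝ) (hε : 0 < ε) :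
    Tendsto (fun T => μ {s | ε < |F T s - y s|}) atTop (nhds 0) := by
  have h1 := tendstoInMeasure_of_tendsto_Lp hF
  rw [tendstoInMeasure_iff_norm] at h1
  refine tendsto_of_tendsto_of_tendsto_of_le_of_le tendsto_const_nhds (h1 ε hε)
    (fun _ => zero_le) (fun T => measure_mono fun s hs => ?_)
  exact le_of_lt (show ε < |F T s - y s| from hs)

lemma meas2 (h : Sys μ d φ w) (U A : _ → Lp ℝ 1 μ →L[ℝ] Lp ℝ 1 μ)
    (hU : ∀ t, ∀ x : Lp ℝ 1 μ, U t x =ᵐ[μ] fun s => w t s * x (φ t s))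
    (hA : ∀ T, ∀ x : Lp ℝ 1 μ,
      A T x =ᵐ[μ] fun s => ((2 * T) ^ d)⁻¹ * ∫ t in box d T, w t s * x (φ t s))
    (hAn : ∀ T x, ‖A T x‖ ≤ ‖x‖)
    (V : (Fin d → ℝ) → Lp ℝ 2 μ →L[ℝ] Lp ℝ 2 μ)
    (hV : ∀ t, ∀ x : Lp ℝ 2 μ, V t x =ᵐ[μ] fun s => √(w t s) * x (φ t s))
    (hVn : ∀ t x, ‖V t x‖ = ‖x‖) (v : Lp ℝ 2 μ)
    (hv : ∀ q : Lp ℝ 2 μ, (∀ t, V t q = q) → ∀ᵐ s ∂μ, v s = 0 → q s = 0)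
    (x : Lp ℝ 1 μ) (G : Set S) (hG : MeasurableSet G) (hGf : μ G ≠ ⊤) (hGv : ∀ s ∈ G, v s = 0)
    (ε : ℝ) (hε : 0 < ε) :
    Tendsto (fun T => μ ({s | ε < A T x s} ∩ G)) atTop (nhds 0) := by
  have hn : indicatorConstLp 2 hG hGf (1 : ℝ) ∈ NN V := by
    have : CompleteSpace (NN V) := (Submodule.isClosed_topologicalClosure _).completeSpace_coe
    rw [← Submodule.orthogonal_orthogonal (NN V), Submodule.mem_orthogonal]
    intro q hq
    rw [real_inner_comm, L2.inner_indicatorConstLp_one]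
    have h1 := hv q ((NN_orth V hVn q).1 hq)
    apply setIntegral_eq_zero_of_ae_eq_zero
    filter_upwards [h1] with s hs hsG
    exact hs (hGv s hsG)
  have h1 := h.nullPart U A hU hA hAn V hV hVn x _ hn
  simp only [L2.inner_indicatorConstLp_one] at h1
  have hεs : 0 < √ε := Real.sqrt_pos.2 hε
  have h2 := ENNReal.tendsto_ofReal (h1.const_mul (√ε)⁻¹)
  rw [mul_zero, ENNReal.ofReal_zero] at h2
  refine tendsto_of_tendsto_of_tendsto_of_le_of_le tendsto_const_nhds h2
    (fun _ => zero_le) (fun T => ?_)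
  have hfin : IsFiniteMeasure (μ.restrict G) := ⟨by simpa using hGf.lt_top⟩
  have e : ∫ s in G, (sqmem (A T x)).toLp _ s ∂μ = ∫ s in G, √(A T x s) ∂μ :=
    integral_congr_ae (ae_restrict_of_ae (sqmem (A T x)).coeFn_toLp)
  have hint : Integrable (fun s => √(A T x s)) (μ.restrict G) :=
    ((sqmem (A T x)).restrict G).integrable (by norm_num)
  have h3 := mul_meas_ge_le_integral_of_nonneg
    (Eventually.of_forall fun s => Real.sqrt_nonneg _) hint √ε
  change _ ≤ ENNReal.ofReal ((√ε)⁻¹ * ∫ s in G, (sqmem (A T x)).toLp _ s ∂μ)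
  rw [e]
  calc μ ({s | ε < A T x s} ∩ G) ≤ (μ.restrict G) {s | √ε ≤ √(A T x s)} := by
        rw [Measure.restrict_apply' hG]
        refine measure_mono (Set.inter_subset_inter_left _ fun s hs => ?_)
        exact Real.sqrt_le_sqrt (le_of_lt (show ε < A T x s from hs))
    _ = ENNReal.ofReal ((μ.restrict G).real {s | √ε ≤ √(A T x s)}) := by
        rw [ofReal_measureReal]
    _ ≤ _ := by
        apply ENNReal.ofReal_le_ofReal
        rw [inv_mul_eq_div, le_div_iff₀ hεs, mul_comm]
        exact h3

end Sys
namespace Sys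
variable {S : Type*} [MeasurableSpace S] {μ : Measure S} [SigmaFinite μ] {d : ℕ}
    {φ : (Fin d → ℝ) → S → S} {w : (Fin d → ℝ) → S → ℝ}

lemma main (h : Sys μ d φ w) (f₀ : S → ℝ) (hf₀ : Integrable f₀ μ) :
    ∃ ftil : S → ℝ, Integrable ftil μ ∧
      (∀ ε : ℝ, 0 < ε → ∀ B : Set S, MeasurableSet B → μ B < ⊤ →
        Tendsto (fun T : ℝ =>
          μ ({s | ε < |((2 * T) ^ d)⁻¹ *
              (∫ t in box d T, w t s * f₀ (φ t s)) - ftil s|} ∩ B))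
          atTop (nhds 0)) ∧
      (∀ t, ∀ᵐ s ∂μ, w t s * ftil (φ t s) = ftil s) := by
  choose U hU using h.opU
  choose V hV hVn using h.opV
  choose A hA hAn using h.opA
  obtain ⟨v, hvi, hv⟩ := h.exv V hV hVn
  have hvm : Measurable (v : S → ℝ) := (Lp.stronglyMeasurable v).measurable
  have hZ : MeasurableSet {s | v s = 0} := hvm (measurableSet_singleton 0)
  have hf1 : MemLp f₀ 1 μ := memLp_one_iff_integrable.2 hf₀
  have hY1 : MemLp ({s | v s = 0}ᶜ.indicator f₀) 1 μ := hf1.indicator hZ.compl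
  have hZ1 : MemLp ({s | v s = 0}.indicator f₀) 1 μ := hf1.indicator hZ
  obtain ⟨xY, hxY⟩ : ∃ x : Lp ℝ 1 μ, x =ᵐ[μ] {s | v s = 0}ᶜ.indicator f₀ :=
    ⟨hY1.toLp, hY1.coeFn_toLp⟩
  obtain ⟨xZ, hxZ⟩ : ∃ x : Lp ℝ 1 μ, x =ᵐ[μ] {s | v s = 0}.indicator f₀ :=
    ⟨hZ1.toLp, hZ1.coeFn_toLp⟩
  obtain ⟨aZ, haZ⟩ : ∃ x : Lp ℝ 1 μ, x =ᵐ[μ] fun s => |xZ s| :=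
    ⟨(Lp.memLp xZ).abs.toLp, (Lp.memLp xZ).abs.coeFn_toLp⟩
  obtain ⟨y, hy, hyi⟩ := h.posPart U A hU hA hAn V hV hVn v hvi xY (by
    filter_upwards [hxY] with s hs h0
    rw [hs]; simp [h0])
  refine ⟨y, L1.integrable_coeFn y, ?_, ?_⟩
  · intro ε hε B hB hBf
    have m1 := meas1 (fun T => A T xY) y hy (ε / 2) (by positivity)
    have m2 := h.meas2 U A hU hA hAn V hV hVn v hv aZ (B ∩ {s | v s = 0}) (hB.inter hZ)
      ((measure_mono Set.inter_subset_left).trans_lt hBf).ne (fun s hs => hs.2) (ε / 2)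
      (by positivity)
    have m3 := m1.add m2
    rw [add_zero] at m3
    refine tendsto_of_tendsto_of_tendsto_of_le_of_le' tendsto_const_nhds m3
      (Eventually.of_forall fun _ => zero_le) ?_
    filter_upwards [eventually_gt_atTop 0] with T hT
    refine le_trans (measure_mono_ae ?_) (measure_union_le _ _)
    have k0 : f₀ =ᵐ[μ] (xY + xZ : Lp ℝ 1 μ) := by
      filter_upwards [Lp.coeFn_add xY xZ, hxY, hxZ] with s h1 h2 h3
      rw [h1, Pi.add_apply, h2, h3]
      by_cases h0 : v s = 0 <;> simp [h0]
    -- vanishing on the positive part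
    have k1 : ∀ᵐ s ∂μ, ∀ᵐ t : (Fin d → ℝ), v s ≠ 0 → xZ (φ t s) = 0 := by
      have e1 : ∀ᵐ t : (Fin d → ℝ), ∀ᵐ s ∂μ, v s ≠ 0 → xZ (φ t s) = 0 := by
        refine Eventually.of_forall fun t => ?_
        have e := hV t v
        rw [hvi] at e
        filter_upwards [e, (h.qmp t).ae_eq_comp hxZ] with s h1 h2 h3
        simp only [Function.comp_apply] at h2
        rw [h2]
        rw [h1] at h3
        have := right_ne_zero_of_mul h3
        simp [this]
      have hzm := (Lp.stronglyMeasurable xZ).measurable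
      rw [Measure.ae_ae_comm (p := fun t s => v s ≠ 0 → xZ (φ t s) = 0)] at e1
      · exact e1
      · refine MeasurableSet.imp ?_ ?_
        · exact (measurable_snd (hvm (measurableSet_singleton 0))).compl
        · exact (hzm.comp h.joint) (measurableSet_singleton 0)
    filter_upwards [h.congrA _ _ k0, hA T (xY + xZ), Lp.coeFn_add (A T xY) (A T xZ),
      h.congrA _ _ haZ, hA T aZ, hA T xZ, k1] with s h1 h2 h3 h4 h5 h6 h7 h8
    obtain ⟨h8, h9⟩ := h8
    have e1 : ∫ t in box d T, w t s * f₀ (φ t s) =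
        ∫ t in box d T, w t s * (xY + xZ : Lp ℝ 1 μ) (φ t s) := by
      apply integral_congr_ae
      filter_upwards [ae_restrict_of_ae h1] with t ht
      rw [ht]
    change ε < |_| at h8
    rw [e1, ← h2, map_add, h3, Pi.add_apply] at h8
    by_cases h0 : v s = 0
    · by_cases h10 : ε / 2 < |A T xY s - y s|
      · exact Or.inl h10
      · refine Or.inr ⟨?_, h9, h0⟩
        change ε / 2 < A T aZ s
        have : |A T xZ s| ≤ A T aZ s := by
          rw [h5, h6, abs_mul, abs_of_pos (by positivity : 0 < ((2 * T) ^ d)⁻¹)]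
          gcongr
          rw [← Real.norm_eq_abs]
          refine (norm_integral_le_integral_norm _).trans_eq ?_
          apply integral_congr_ae
          filter_upwards [ae_restrict_of_ae h4] with t ht
          rw [ht, norm_mul, Real.norm_of_nonneg (h.wpos _ _).le, Real.norm_eq_abs]
        have h11 : |A T xY s + A T xZ s - y s| ≤ |A T xY s - y s| + |A T xZ s| := by
          have := abs_add_le (A T xY s - y s) (A T xZ s)
          rwa [show A T xY s - y s + A T xZ s = A T xY s + A T xZ s - y s by ring] at this
        linarith
    · left
      have : A T xZ s = 0 := by
        have e0 : ∫ t in box d T, w t s * xZ (φ t s) = 0 := by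
          apply integral_eq_zero_of_ae
          filter_upwards [ae_restrict_of_ae h7] with t ht
          rw [ht h0]; simp
        rw [h6, e0, mul_zero]
      rw [this, add_zero] at h8
      change ε / 2 < |_|
      linarith
  · intro t
    filter_upwards [hU t y] with s hs
    rw [← hs, hyi]

end Sys

/-- Multiparameter stochastic ergodic theorem, continuous case: for a nonsingular
jointly measurable `ℝ^d`-action `{φ_t}` on a standard Borel space with σ-finite measure `μ`,
with `w : ℝ^d × S → (0,∞)` jointly measurable such that `w(t,·)` is a version of the
Radon–Nikodym derivative of `A ↦ μ(φ_t(A))` (i.e. of `μ ∘ φ_{-t}⁻¹`) w.r.t. `μ` and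
`w(t+h,s) = w(h,s)·w(t,φ_h(s))`, and `f₀ ∈ L¹(μ)`, the averages
`A_T f = (2T)^{-d} ∫_{(−T,T]^d} w(t,·) f₀(φ_t(·)) dt` converge locally in measure to some
`f̃ ∈ L¹(μ)` satisfying `w(t,s) f̃(φ_t(s)) = f̃(s)` a.e. for every `t`. -/
theorem stmt7 {S : Type*} [MeasurableSpace S] [StandardBorelSpace S]
    (μ : Measure S) [SigmaFinite μ] (d : ℕ)
    (φ : (Fin d → ℝ) → S → S)
    (hφjoint : Measurable fun p : (Fin d → ℝ) × S => φ p.1 p.2)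
    (hid : ∀ s, φ 0 s = s)
    (hcomp : ∀ u v s, φ (u + v) s = φ u (φ v s))
    (hns : ∀ t, μ.map (φ t) ≪ μ ∧ μ ≪ μ.map (φ t))
    (w : (Fin d → ℝ) → S → ℝ)
    (hwjoint : Measurable fun p : (Fin d → ℝ) × S => w p.1 p.2)
    (hwpos : ∀ t s, 0 < w t s)
    (hwver : ∀ t, (fun s => ENNReal.ofReal (w t s)) =ᵐ[μ] (μ.map (φ (-t))).rnDeriv μ)
    (hwcoc : ∀ t h : Fin d → ℝ, ∀ s, w (t + h) s = w h s * w t (φ h s))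
    (f₀ : S → ℝ) (hf₀ : Integrable f₀ μ) :
    ∃ ftil : S → ℝ, Integrable ftil μ ∧
      (∀ ε : ℝ, 0 < ε → ∀ B : Set S, MeasurableSet B → μ B < ⊤ →
        Tendsto (fun T : ℝ =>
          μ ({s | ε < |((2 * T) ^ d)⁻¹ *
              (∫ t in Set.univ.pi fun _ : Fin d => Set.Ioc (-T) T,
                w t s * f₀ (φ t s)) - ftil s|} ∩ B))
          atTop (nhds 0)) ∧
      (∀ t, ∀ᵐ s ∂μ, w t s * ftil (φ t s) = ftil s) := by
  exact Sys.main (μ := μ) (d := d) (φ := φ) (w := w)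
    ⟨hφjoint, hid, hcomp, hns, hwjoint, hwpos, hwver, hwcoc⟩ f₀ hf₀
end

section
/- (Multiparameter Birkhoff theorem, discrete case.) Let (S, 𝓑, μ) be a probability space and let {φ_t}_{t∈ℤ^d} be a measure-preserving ℤ^d-action on (S,μ), i.e., each φ_t is an invertible bi-measurable transformation with μ∘φ_t^{-1} = μ, φ_0 = id, and φ_{u+v} = φ_u∘φ_v. Let f₀ ∈ L¹(S,μ) and let 𝓘 denote the σ-algebra of all measurable sets A with φ_t^{-1}(A) = A for all t ∈ ℤ^d. Then the averages A_T f := (2T)^{-d} Σ_{t ∈ (−T,T]^d ∩ ℤ^d} f₀∘φ_t converge to the conditional expectation E_μ[f₀ | 𝓘] both μ-almost everywhere and in L¹(S,μ), as T → ∞. -/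
open MeasureTheory Filter

namespace ZdErg

open scoped ENNReal

noncomputable def cb {d : ℕ} (t : Fin d → ℤ) (r : ℕ) : Finset (Fin d → ℤ) :=
  Fintype.piFinset fun i => Finset.Icc (t i - r) (t i + r)

lemma mem_cb {d : ℕ} {t u : Fin d → ℤ} {r : ℕ} :
    u ∈ cb t r ↔ ∀ i, t i - r ≤ u i ∧ u i ≤ t i + r := by
  simp [cb, Fintype.mem_piFinset]

lemma card_cb {d : ℕ} (t : Fin d → ℤ) (r : ℕ) : (cb t r).card = (2 * r + 1) ^ d := by
  rw [cb, Fintype.card_piFinset]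
  have : ∀ i, (Finset.Icc (t i - r) (t i + r)).card = 2 * r + 1 := by
    intro i; rw [Int.card_Icc]; omega
  simp [this]

lemma coe_cb {d : ℕ} (t : Fin d → ℤ) (r : ℕ) :
    Metric.closedBall t (r : ℝ) = (cb t r : Set (Fin d → ℤ)) := by
  ext u
  rw [Metric.mem_closedBall, dist_pi_le_iff (by positivity), Finset.mem_coe, mem_cb]
  refine forall_congr' fun i => ?_
  rw [Int.dist_eq, abs_le]
  constructor
  · rintro ⟨h1, h2⟩
    constructor
    · have : ((t i - r : ℤ) : ℝ) ≤ (u i : ℤ) := by push_cast; linarith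
      exact_mod_cast this
    · have : ((u i : ℤ) : ℝ) ≤ (t i + r : ℤ) := by push_cast; linarith
      exact_mod_cast this
  · rintro ⟨h1, h2⟩
    have h1' : ((t i - r : ℤ) : ℝ) ≤ (u i : ℤ) := by exact_mod_cast h1
    have h2' : ((u i : ℤ) : ℝ) ≤ (t i + r : ℤ) := by exact_mod_cast h2
    push_cast at h1' h2'
    constructor <;> linarith

lemma cover {d : ℕ} (a : (Fin d → ℤ) → ℝ≥0∞) (D B : Finset (Fin d → ℤ))
    (R : (Fin d → ℤ) → ℕ) (N : ℕ) (hR : ∀ t ∈ D, 1 ≤ R t ∧ R t ≤ N) (lam : ℝ≥0∞)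
    (h : ∀ t ∈ D, lam * (2 * (R t : ℝ≥0∞)) ^ d ≤ ∑ u ∈ cb t (R t), a u)
    (hB : ∀ t ∈ D, cb t (R t) ⊆ B) :
    lam * (D.card : ℝ≥0∞) ≤ 6 ^ d * ∑ u ∈ B, a u := by
  classical
  obtain ⟨u, huD, hdisj, hcov⟩ :=
    Vitali.exists_disjoint_subfamily_covering_enlargement_closedBall
      (D : Set (Fin d → ℤ)) (fun t => t) (fun t => (R t : ℝ)) (N : ℝ)
      (fun t ht => by exact_mod_cast (hR t ht).2) 5 (by norm_num)
  have hfin : u.Finite := D.finite_toSet.subset huD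
  lift u to Finset (Fin d → ℤ) using hfin
  have huD' : u ⊆ D := by exact_mod_cast huD
  have hsub : D ⊆ u.biUnion fun t => cb t (5 * R t) := by
    intro t ht
    obtain ⟨b, hb, hb2⟩ := hcov t ht
    rw [Finset.mem_biUnion]
    refine ⟨b, hb, ?_⟩
    have e : (5 * (R b : ℝ)) = ((5 * R b : ℕ) : ℝ) := by push_cast; rfl
    have hb3 := hb2 (Metric.mem_closedBall_self (Nat.cast_nonneg (R t)))
    rw [e, coe_cb] at hb3
    exact_mod_cast hb3
  have hcard : D.card ≤ ∑ t ∈ u, 6 ^ d * (2 * R t) ^ d := by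
    refine (Finset.card_le_card hsub).trans (Finset.card_biUnion_le.trans ?_)
    refine Finset.sum_le_sum fun t ht => ?_
    rw [card_cb, ← mul_pow]
    have := (hR t (huD' ht)).1
    exact Nat.pow_le_pow_left (by omega) d
  calc lam * (D.card : ℝ≥0∞)
      ≤ lam * ((∑ t ∈ u, 6 ^ d * (2 * R t) ^ d : ℕ) : ℝ≥0∞) := by gcongr
    _ = 6 ^ d * ∑ t ∈ u, lam * (2 * (R t : ℝ≥0∞)) ^ d := by
        push_cast
        rw [Finset.mul_sum, Finset.mul_sum]
        refine Finset.sum_congr rfl fun t _ => by ring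
    _ ≤ 6 ^ d * ∑ t ∈ u, ∑ v ∈ cb t (R t), a v := by
        gcongr with t ht
        exact h t (huD' ht)
    _ = 6 ^ d * ∑ v ∈ u.biUnion (fun t => cb t (R t)), a v := by
        rw [Finset.sum_biUnion]
        intro x hx y hy hxy
        have := hdisj hx hy hxy
        simp only [Function.onFun, coe_cb] at this ⊢
        exact_mod_cast this
    _ ≤ 6 ^ d * ∑ v ∈ B, a v := by
        gcongr
        exact Finset.biUnion_subset.2 fun t ht => hB t (huD' ht)

structure Act {S : Type*} [MeasurableSpace S] (μ : Measure S) {d : ℕ}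
    (φ : (Fin d → ℤ) → S → S) : Prop where
  id : ∀ s, φ 0 s = s
  comp : ∀ u v s, φ (u + v) s = φ u (φ v s)
  mp : ∀ t, MeasurePreserving (φ t) μ μ

lemma sum_cb {S : Type*} [MeasurableSpace S] {μ : Measure S} {d : ℕ}
    {φ : (Fin d → ℤ) → S → S} (hφ : Act μ φ) (g : S → ℝ≥0∞) (t : Fin d → ℤ) (r : ℕ) (s : S) :
    ∑ v ∈ cb 0 r, g (φ v (φ t s)) = ∑ u ∈ cb t r, g (φ u s) := by
  refine Finset.sum_bij' (fun v _ => v + t) (fun u _ => u - t) ?_ ?_ ?_ ?_ ?_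
  · intro v hv; rw [mem_cb] at hv ⊢; intro i; have := hv i; simp at this ⊢; omega
  · intro v hv; rw [mem_cb] at hv ⊢; intro i; have := hv i; simp at this ⊢; omega
  · intros; simp
  · intros; simp
  · intro v _; rw [hφ.comp]

lemma maximalN {S : Type*} [MeasurableSpace S] {μ : Measure S} {d : ℕ}
    {φ : (Fin d → ℤ) → S → S} (hφ : Act μ φ) (g : S → ℝ≥0∞) (hg : Measurable g)
    (lam : ℝ≥0∞) (N : ℕ) :
    lam * μ {s | ∃ T : ℕ, 1 ≤ T ∧ T ≤ N ∧
      lam * (2 * (T : ℝ≥0∞)) ^ d ≤ ∑ u ∈ cb 0 T, g (φ u s)} ≤ 12 ^ d * ∫⁻ s, g s ∂μ := by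
  classical
  set E := {s | ∃ T : ℕ, 1 ≤ T ∧ T ≤ N ∧
      lam * (2 * (T : ℝ≥0∞)) ^ d ≤ ∑ u ∈ cb 0 T, g (φ u s)} with hE
  have hEm : MeasurableSet E := by
    have : E = ⋃ T : ℕ, ⋃ _ : 1 ≤ T, ⋃ _ : T ≤ N,
        {s | lam * (2 * (T : ℝ≥0∞)) ^ d ≤ ∑ u ∈ cb 0 T, g (φ u s)} := by
      ext s; simp only [hE, Set.mem_ofPred_eq, Set.mem_iUnion, exists_prop]
    rw [this]
    refine MeasurableSet.iUnion fun T => MeasurableSet.iUnion fun _ => MeasurableSet.iUnion fun _ =>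
      measurableSet_le measurable_const ?_
    exact Finset.measurable_sum _ fun u _ => hg.comp (hφ.mp u).measurable
  have key : ∀ s, lam * ∑ t ∈ cb (0 : Fin d → ℤ) N, E.indicator (fun _ => (1 : ℝ≥0∞)) (φ t s)
      ≤ 6 ^ d * ∑ u ∈ cb 0 (2 * N), g (φ u s) := by
    intro s
    have hD : ∑ t ∈ cb (0 : Fin d → ℤ) N, E.indicator (fun _ => (1 : ℝ≥0∞)) (φ t s)
        = (((cb (0 : Fin d → ℤ) N).filter fun t => φ t s ∈ E).card : ℝ≥0∞) := by
      simp [Set.indicator_apply, Finset.sum_boole]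
    rw [hD]
    have : ∀ t : Fin d → ℤ, ∃ T : ℕ, φ t s ∈ E → (1 ≤ T ∧ T ≤ N ∧
      lam * (2 * (T : ℝ≥0∞)) ^ d ≤ ∑ u ∈ cb 0 T, g (φ u (φ t s))) := by
      intro t
      by_cases ht : φ t s ∈ E
      · obtain ⟨T, hT⟩ := ht
        exact ⟨T, fun _ => hT⟩
      · exact ⟨0, fun h => absurd h ht⟩
    choose R hR using this
    refine cover (fun u => g (φ u s)) _ _ R N ?_ lam ?_ ?_
    · intro t ht
      have := hR t (Finset.mem_filter.1 ht).2
      exact ⟨this.1, this.2.1⟩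
    · intro t ht
      have := hR t (Finset.mem_filter.1 ht).2
      rw [← sum_cb hφ]
      exact this.2.2
    · intro t ht u hu
      have h1 := hR t (Finset.mem_filter.1 ht).2
      have h2 := (Finset.mem_filter.1 ht).1
      rw [mem_cb] at h2 hu ⊢
      intro i
      have := h2 i; have := hu i
      simp at *; omega
  have hm1 : ∀ t, Measurable fun s => E.indicator (fun _ => (1 : ℝ≥0∞)) (φ t s) := fun t =>
    (measurable_const.indicator hEm).comp (hφ.mp t).measurable
  have hm2 : ∀ t, Measurable fun s => g (φ t s) := fun t => hg.comp (hφ.mp t).measurable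
  have hint := lintegral_mono (μ := μ) key
  rw [lintegral_const_mul _ (Finset.measurable_sum _ fun u _ => hm1 u),
    lintegral_const_mul _ (Finset.measurable_sum _ fun u _ => hm2 u),
    lintegral_finsetSum _ (fun u _ => hm1 u),
    lintegral_finsetSum _ (fun u _ => hm2 u)] at hint
  have e1 : ∀ t, ∫⁻ s, E.indicator (fun _ => (1 : ℝ≥0∞)) (φ t s) ∂μ = μ E := fun t => by
    rw [(hφ.mp t).lintegral_comp (measurable_const.indicator hEm)]
    simp [lintegral_indicator hEm]
  have e2 : ∀ t, ∫⁻ s, g (φ t s) ∂μ = ∫⁻ s, g s ∂μ := fun t => (hφ.mp t).lintegral_comp hg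
  simp only [e1, e2, Finset.sum_const, card_cb, nsmul_eq_mul] at hint
  have hc0 : (((2 * N + 1) ^ d : ℕ) : ℝ≥0∞) ≠ 0 := by positivity
  have hct : (((2 * N + 1) ^ d : ℕ) : ℝ≥0∞) ≠ ∞ := ENNReal.natCast_ne_top _
  rw [← ENNReal.mul_le_mul_iff_right hc0 hct]
  calc _ = lam * ((((2 * N + 1) ^ d : ℕ) : ℝ≥0∞) * μ E) := by ring
    _ ≤ _ := hint
    _ = ((6 ^ d * (2 * (2 * N) + 1) ^ d : ℕ) : ℝ≥0∞) * ∫⁻ s, g s ∂μ := by push_cast; ring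
    _ ≤ (((2 * N + 1) ^ d * 12 ^ d : ℕ) : ℝ≥0∞) * ∫⁻ s, g s ∂μ := by
        refine mul_le_mul_left (Nat.cast_le.2 ?_) _
        rw [← mul_pow, ← mul_pow]
        exact Nat.pow_le_pow_left (by omega) d
    _ = _ := by push_cast; ring

lemma maximal {S : Type*} [MeasurableSpace S] {μ : Measure S} {d : ℕ}
    {φ : (Fin d → ℤ) → S → S} (hφ : Act μ φ) (g : S → ℝ≥0∞) (hg : Measurable g)
    (lam : ℝ≥0∞) :
    lam * μ {s | ∃ T : ℕ, 1 ≤ T ∧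
      lam * (2 * (T : ℝ≥0∞)) ^ d ≤ ∑ u ∈ cb 0 T, g (φ u s)} ≤ 12 ^ d * ∫⁻ s, g s ∂μ := by
  have e : {s | ∃ T : ℕ, 1 ≤ T ∧
      lam * (2 * (T : ℝ≥0∞)) ^ d ≤ ∑ u ∈ cb 0 T, g (φ u s)} = ⋃ N : ℕ, {s | ∃ T : ℕ, 1 ≤ T ∧ T ≤ N ∧
      lam * (2 * (T : ℝ≥0∞)) ^ d ≤ ∑ u ∈ cb 0 T, g (φ u s)} := by
    ext s
    simp only [Set.mem_ofPred_eq, Set.mem_iUnion]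
    constructor
    · rintro ⟨T, h1, h2⟩; exact ⟨T, T, h1, le_rfl, h2⟩
    · rintro ⟨N, T, h1, -, h2⟩; exact ⟨T, h1, h2⟩
  rw [e, Monotone.measure_iUnion, ENNReal.mul_iSup]
  · exact iSup_le fun N => maximalN hφ g hg lam N
  · intro N M hNM s
    rintro ⟨T, h1, h2, h3⟩
    exact ⟨T, h1, h2.trans hNM, h3⟩


noncomputable def box (d T : ℕ) : Finset (Fin d → ℤ) :=
  Fintype.piFinset fun _ : Fin d => Finset.Ioc (-(T : ℤ)) (T : ℤ)

lemma mem_box {d T : ℕ} {u : Fin d → ℤ} : u ∈ box d T ↔ ∀ i, -(T : ℤ) < u i ∧ u i ≤ T := by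
  simp [box, Fintype.mem_piFinset]

lemma card_box (d T : ℕ) : (box d T).card = (2 * T) ^ d := by
  rw [box, Fintype.card_piFinset]
  have : (Finset.Ioc (-(T : ℤ)) (T : ℤ)).card = 2 * T := by
    rw [Int.card_Ioc]; omega
  simp [this]

noncomputable def avg {S : Type*} {d : ℕ} (φ : (Fin d → ℤ) → S → S) (f : S → ℝ) (T : ℕ) (s : S) :
    ℝ := ((2 * T : ℝ) ^ d)⁻¹ * ∑ t ∈ box d T, f (φ t s)

def inv {S : Type*} [MeasurableSpace S] {d : ℕ} (φ : (Fin d → ℤ) → S → S) : MeasurableSpace S :=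
  MeasurableSpace.generateFrom {A : Set S | MeasurableSet A ∧ ∀ t, φ t ⁻¹' A = A}

lemma measurableSet_inv {S : Type*} [MeasurableSpace S] {d : ℕ} (φ : (Fin d → ℤ) → S → S)
    (A : Set S) : MeasurableSet[inv φ] A ↔ MeasurableSet A ∧ ∀ t, φ t ⁻¹' A = A := by
  constructor
  · intro h
    induction h with
    | basic u hu => exact hu
    | empty => simp
    | compl u _ ih => exact ⟨ih.1.compl, fun t => by rw [Set.preimage_compl, ih.2 t]⟩
    | iUnion f _ ih =>
      exact ⟨MeasurableSet.iUnion fun n => (ih n).1, fun t => by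
        rw [Set.preimage_iUnion]; exact Set.iUnion_congr fun n => (ih n).2 t⟩
  · intro h
    exact MeasurableSpace.measurableSet_generateFrom h

lemma inv_le {S : Type*} [m : MeasurableSpace S] {d : ℕ} (φ : (Fin d → ℤ) → S → S) :
    inv φ ≤ m := fun A hA => ((measurableSet_inv φ A).1 hA).1

set_option linter.unusedSectionVars false

section
variable {S : Type*} [MeasurableSpace S] {μ : Measure S} [IsProbabilityMeasure μ] {d : ℕ}
    {φ : (Fin d → ℤ) → S → S}

lemma avg_congr (hφ : Act μ φ) {f g : S → ℝ} (h : f =ᵐ[μ] g) :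
    ∀ᵐ s ∂μ, ∀ T, avg φ f T s = avg φ g T s := by
  have : ∀ᵐ s ∂μ, ∀ t, f (φ t s) = g (φ t s) := by
    rw [ae_all_iff]
    exact fun t => (hφ.mp t).quasiMeasurePreserving.ae h
  filter_upwards [this] with s hs T
  simp [avg, hs]

lemma avg_add (f g : S → ℝ) (T : ℕ) (s : S) :
    avg φ (f + g) T s = avg φ f T s + avg φ g T s := by
  simp [avg, Finset.sum_add_distrib, mul_add]

lemma avg_smul (c : ℝ) (f : S → ℝ) (T : ℕ) (s : S) :
    avg φ (c • f) T s = c * avg φ f T s := by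
  simp only [avg, Pi.smul_apply, smul_eq_mul, ← Finset.mul_sum]; ring

lemma avg_aesm (hφ : Act μ φ) {f : S → ℝ} (hf : AEStronglyMeasurable f μ) (T : ℕ) :
    AEStronglyMeasurable (avg φ f T) μ := by
  have : avg φ f T = fun s => ((2 * T : ℝ) ^ d)⁻¹ * (∑ t ∈ box d T, fun s => f (φ t s)) s := by
    ext s; simp [avg]
  rw [this]
  refine AEStronglyMeasurable.const_mul ?_ _
  refine Finset.aestronglyMeasurable_sum _ fun t _ => ?_
  exact hf.comp_measurePreserving (hφ.mp t)

lemma enorm_c {T : ℕ} (hT : 1 ≤ T) : ‖((2 * T : ℝ) ^ d)⁻¹‖ₑ * (2 * (T : ℝ≥0∞)) ^ d = 1 := by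
  have h : (2 * T : ℝ) ^ d ≠ 0 := by positivity
  have h2 : ‖(2 * T : ℝ) ^ d‖ₑ = (2 * (T : ℝ≥0∞)) ^ d := by
    rw [enorm_pow, enorm_mul]
    congr 2
    · rw [Real.enorm_eq_ofReal (by norm_num)]; simp
    · rw [Real.enorm_eq_ofReal (by positivity)]; simp
  rw [← h2, ← enorm_mul, inv_mul_cancel₀ h]; simp

lemma maximal_avg (hφ : Act μ φ) {f : S → ℝ} (hf : AEStronglyMeasurable f μ) (lam : ℝ≥0∞) :
    lam * μ {s | ∃ T : ℕ, 1 ≤ T ∧ lam ≤ ‖avg φ f T s‖ₑ} ≤ 12 ^ d * eLpNorm f 1 μ := by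
  rw [eLpNorm_congr_ae hf.ae_eq_mk, eLpNorm_one_eq_lintegral_enorm]
  refine le_trans ?_ (maximal hφ _ hf.stronglyMeasurable_mk.enorm lam)
  refine mul_le_mul_right (measure_mono_ae ?_) _
  filter_upwards [avg_congr hφ hf.ae_eq_mk] with s hs
  rintro ⟨T, hT, h⟩
  refine ⟨T, hT, ?_⟩
  rw [hs T, avg, enorm_mul] at h
  calc lam * (2 * (T : ℝ≥0∞)) ^ d ≤ (‖((2 * T : ℝ) ^ d)⁻¹‖ₑ *
        ‖∑ t ∈ box d T, (hf.mk f) (φ t s)‖ₑ) * (2 * (T : ℝ≥0∞)) ^ d := by gcongr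
    _ = (‖((2 * T : ℝ) ^ d)⁻¹‖ₑ * (2 * (T : ℝ≥0∞)) ^ d)
        * ‖∑ t ∈ box d T, (hf.mk f) (φ t s)‖ₑ := by ring
    _ = ‖∑ t ∈ box d T, (hf.mk f) (φ t s)‖ₑ := by rw [enorm_c hT, one_mul]
    _ ≤ ∑ t ∈ box d T, ‖(hf.mk f) (φ t s)‖ₑ := enorm_sum_le _ _
    _ ≤ _ := by
      refine Finset.sum_le_sum_of_subset ?_
      intro u hu
      rw [mem_box] at hu; rw [mem_cb]
      intro i; have := hu i; simp; omega

lemma eLpNorm_avg (hφ : Act μ φ) {f : S → ℝ} (hf : AEStronglyMeasurable f μ) {T : ℕ}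
    (hT : 1 ≤ T) : eLpNorm (avg φ f T) 1 μ ≤ eLpNorm f 1 μ := by
  have : avg φ f T = ((2 * T : ℝ) ^ d)⁻¹ • (∑ t ∈ box d T, f ∘ (φ t)) := by
    ext s; simp [avg]
  rw [this, eLpNorm_const_smul]
  calc _ ≤ ‖((2 * T : ℝ) ^ d)⁻¹‖ₑ * ∑ t ∈ box d T, eLpNorm (f ∘ φ t) 1 μ := by
        gcongr
        exact eLpNorm_sum_le (fun t _ => hf.comp_measurePreserving (hφ.mp t)) le_rfl
    _ = ‖((2 * T : ℝ) ^ d)⁻¹‖ₑ * (2 * (T : ℝ≥0∞)) ^ d * eLpNorm f 1 μ := by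
        simp only [fun t => eLpNorm_comp_measurePreserving (p := 1) hf (hφ.mp t), Finset.sum_const,
          card_box, nsmul_eq_mul]
        push_cast; ring
    _ ≤ _ := by rw [enorm_c hT, one_mul]

structure Good (μ : Measure S) (φ : (Fin d → ℤ) → S → S) (f : S → ℝ) : Prop where
  int : Integrable f μ
  ae : ∀ᵐ s ∂μ, Tendsto (fun T => avg φ f T s) atTop (nhds ((μ[f|inv φ]) s))
  l1 : Tendsto (fun T => eLpNorm (avg φ f T - μ[f|inv φ]) 1 μ) atTop (nhds 0)

lemma Good.add (hφ : Act μ φ) {f g : S → ℝ} (hf : Good μ φ f) (hg : Good μ φ g) :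
    Good μ φ (f + g) := by
  have hc := condExp_add hf.int hg.int (inv φ)
  refine ⟨hf.int.add hg.int, ?_, ?_⟩
  · filter_upwards [hf.ae, hg.ae, hc] with s h1 h2 h3
    rw [h3]
    simp only [avg_add]
    exact h1.add h2
  · have := hf.l1.add hg.l1
    rw [add_zero] at this
    refine tendsto_of_tendsto_of_tendsto_of_le_of_le tendsto_const_nhds this
      (fun _ => zero_le) fun T => ?_
    have e : avg φ (f + g) T - μ[f + g|inv φ] =ᵐ[μ]
        (avg φ f T - μ[f|inv φ]) + (avg φ g T - μ[g|inv φ]) := by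
      filter_upwards [hc] with s h3
      simp only [Pi.sub_apply, Pi.add_apply, h3, avg_add]; ring
    rw [eLpNorm_congr_ae e]
    exact eLpNorm_add_le ((avg_aesm hφ hf.int.1 T).sub integrable_condExp.1)
      ((avg_aesm hφ hg.int.1 T).sub integrable_condExp.1) le_rfl

lemma Good.smul {f : S → ℝ} (c : ℝ) (hf : Good μ φ f) : Good μ φ (c • f) := by
  have hc := condExp_smul (μ := μ) c f (inv φ)
  refine ⟨hf.int.smul c, ?_, ?_⟩
  · filter_upwards [hf.ae, hc] with s h1 h3
    rw [h3]
    simp only [avg_smul]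
    exact h1.const_mul c
  · have := ENNReal.Tendsto.const_mul (a := ‖c‖ₑ) hf.l1 (Or.inr enorm_ne_top)
    rw [mul_zero] at this
    refine this.congr fun T => ?_
    rw [← eLpNorm_const_smul]
    refine eLpNorm_congr_ae ?_
    filter_upwards [hc] with s h3
    simp only [Pi.sub_apply, Pi.smul_apply, h3, avg_smul, smul_eq_mul]; ring

lemma good_closed (hφ : Act μ φ) {f : S → ℝ} (hf : Integrable f μ)
    (H : ∀ ε : ℝ≥0∞, ε ≠ 0 → ∃ g, Good μ φ g ∧ eLpNorm (f - g) 1 μ ≤ ε) : Good μ φ f := by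
  have hdec : ∀ g, Good μ φ g → ∀ᵐ s ∂μ, ∀ T, avg φ f T s - (μ[f|inv φ]) s =
      (avg φ (f - g) T s + (avg φ g T s - (μ[g|inv φ]) s)) - (μ[f - g|inv φ]) s := by
    intro g hg
    filter_upwards [condExp_sub hf hg.int (inv φ)] with s hs T
    have : avg φ f T s = avg φ (f - g) T s + avg φ g T s := by
      rw [← avg_add, sub_add_cancel]
    rw [hs, this, Pi.sub_apply]; ring
  refine ⟨hf, ?_, ?_⟩
  · have key : ∀ n : ℕ, ∀ᵐ s ∂μ, ∀ᶠ T in atTop,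
        ‖avg φ f T s - (μ[f|inv φ]) s‖ₑ ≤ 3 * ((n + 1 : ℕ) : ℝ≥0∞)⁻¹ := by
      intro n
      set lam : ℝ≥0∞ := ((n + 1 : ℕ) : ℝ≥0∞)⁻¹ with hlam
      have hl0 : lam ≠ 0 := ENNReal.inv_ne_zero.2 (ENNReal.natCast_ne_top _)
      have hC0 : (12 ^ d + 1 : ℝ≥0∞) ≠ 0 := by positivity
      have hCt : (12 ^ d + 1 : ℝ≥0∞) ≠ ∞ := by finiteness
      rw [ae_iff]
      have : lam * μ {s | ¬ ∀ᶠ T in atTop,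
          ‖avg φ f T s - (μ[f|inv φ]) s‖ₑ ≤ 3 * lam} ≤ 0 := by
        refine le_of_forall_gt_imp_ge_of_dense fun δ hδ => ?_
        obtain ⟨g, hg, hgδ⟩ := H (δ / (12 ^ d + 1)) (ENNReal.div_pos hδ.ne' hCt).ne'
        have hm := maximal_avg hφ (hf.sub hg.int).1 lam
        have hc : lam * μ {s | lam ≤ ‖(μ[f - g|inv φ]) s‖ₑ} ≤ eLpNorm (f - g) 1 μ := by
          refine le_trans ?_ (eLpNorm_condExp_le_eLpNorm (m := inv φ) (f - g) le_rfl)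
          rw [eLpNorm_one_eq_lintegral_enorm]
          exact mul_meas_ge_le_lintegral₀ integrable_condExp.1.enorm lam
        calc _ ≤ lam * μ ({s | ∃ T : ℕ, 1 ≤ T ∧ lam ≤ ‖avg φ (f - g) T s‖ₑ} ∪
                {s | lam ≤ ‖(μ[f - g|inv φ]) s‖ₑ}) := by
              refine mul_le_mul_right (measure_mono_ae ?_) _
              filter_upwards [hdec g hg, hg.ae] with s h1 h2 h3
              by_contra hcon
              apply h3
              have hcon1 : ∀ T : ℕ, 1 ≤ T → ‖avg φ (f - g) T s‖ₑ < lam := by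
                intro T hT
                by_contra h
                exact hcon (Or.inl ⟨T, hT, not_lt.1 h⟩)
              have hcon2 : ‖(μ[f - g|inv φ]) s‖ₑ < lam := by
                by_contra h
                exact hcon (Or.inr (not_lt.1 h))
              rw [tendsto_iff_edist_tendsto_0, ENNReal.tendsto_nhds_zero] at h2
              filter_upwards [h2 lam (pos_iff_ne_zero.2 hl0), eventually_ge_atTop 1] with T hT hT1
              rw [edist_eq_enorm_sub] at hT
              rw [h1 T]
              calc _ ≤ _ := enorm_sub_le
                _ ≤ (‖avg φ (f - g) T s‖ₑ + ‖avg φ g T s - (μ[g|inv φ]) s‖ₑ)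
                  + ‖(μ[f - g|inv φ]) s‖ₑ := by gcongr; exact enorm_add_le _ _
                _ ≤ (lam + lam) + lam := by
                  gcongr
                  exact (hcon1 T hT1).le
                _ = 3 * lam := by ring
          _ ≤ lam * (_ + _) := mul_le_mul_right (measure_union_le _ _) _
          _ ≤ 12 ^ d * eLpNorm (f - g) 1 μ + eLpNorm (f - g) 1 μ := by
              rw [mul_add]; exact add_le_add hm hc
          _ = (12 ^ d + 1) * eLpNorm (f - g) 1 μ := by ring
          _ ≤ (12 ^ d + 1) * (δ / (12 ^ d + 1)) := by gcongr
          _ = δ := ENNReal.mul_div_cancel hC0 hCt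
      have h0 := nonpos_iff_eq_zero.1 this
      exact (mul_eq_zero.1 h0).resolve_left hl0
    rw [← ae_all_iff] at key
    filter_upwards [key] with s hs
    rw [tendsto_iff_edist_tendsto_0, ENNReal.tendsto_nhds_zero]
    intro ε hε
    obtain ⟨n, hn⟩ := ENNReal.exists_inv_nat_lt (a := ε / 3)
      (ENNReal.div_pos hε.ne' (by norm_num)).ne'
    filter_upwards [hs n] with T hT
    rw [edist_eq_enorm_sub]
    refine hT.trans ?_
    calc 3 * ((n + 1 : ℕ) : ℝ≥0∞)⁻¹ ≤ 3 * ((n : ℕ) : ℝ≥0∞)⁻¹ := by gcongr; simp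
      _ ≤ 3 * (ε / 3) := by gcongr
      _ = ε := ENNReal.mul_div_cancel (by norm_num) (by norm_num)
  · rw [ENNReal.tendsto_nhds_zero]
    intro ε hε
    have hε3 : 0 < ε / 3 := ENNReal.div_pos hε.ne' (by norm_num)
    obtain ⟨g, hg, hgδ⟩ := H (ε / 3) hε3.ne'
    have h2 := hg.l1
    rw [ENNReal.tendsto_nhds_zero] at h2
    filter_upwards [h2 _ hε3, eventually_ge_atTop 1] with T hT hT1
    have e : avg φ f T - μ[f|inv φ] =ᵐ[μ]
      (avg φ (f - g) T + (avg φ g T - (μ[g|inv φ]))) - (μ[f - g|inv φ]) := by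
      filter_upwards [hdec g hg] with s hs using hs T
    rw [eLpNorm_congr_ae e]
    have m1 := avg_aesm hφ (hf.sub hg.int).1 T
    have m2 : AEStronglyMeasurable (avg φ g T - (μ[g|inv φ])) μ :=
      (avg_aesm hφ hg.int.1 T).sub integrable_condExp.1
    calc _ ≤ _ := eLpNorm_sub_le (m1.add m2) integrable_condExp.1 le_rfl
      _ ≤ (eLpNorm (avg φ (f - g) T) 1 μ + eLpNorm (avg φ g T - (μ[g|inv φ])) 1 μ)
          + eLpNorm (μ[f - g|inv φ]) 1 μ := by
            gcongr; exact eLpNorm_add_le m1 m2 le_rfl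
      _ ≤ (ε / 3 + ε / 3) + ε / 3 := by
          gcongr
          · exact (eLpNorm_avg hφ (hf.sub hg.int).1 hT1).trans hgδ
          · exact (eLpNorm_condExp_le_eLpNorm _ le_rfl).trans hgδ
      _ = ε := ENNReal.add_thirds ε

lemma Good.congr (hφ : Act μ φ) {f g : S → ℝ} (hg : Good μ φ g) (h : f =ᵐ[μ] g) :
    Good μ φ f := by
  refine good_closed hφ (hg.int.congr h.symm) fun ε _ => ⟨g, hg, ?_⟩
  have : f - g =ᵐ[μ] 0 := by filter_upwards [h] with s hs; simp [hs]
  rw [eLpNorm_congr_ae this]; simp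

lemma sum_sub_le {ι : Type*} [DecidableEq ι] {B B' : Finset ι} (h : B' ⊆ B) (a : ι → ℝ) (M : ℝ)
    (ha : ∀ i, |a i| ≤ M) :
    |∑ i ∈ B, a i - ∑ i ∈ B', a i| ≤ M * ((B.card : ℝ) - B'.card) := by
  rw [← Finset.sum_sdiff h, add_sub_cancel_right]
  refine (Finset.abs_sum_le_sum_abs _ _).trans ?_
  refine (Finset.sum_le_card_nsmul _ _ M fun i _ => ha i).trans ?_
  rw [nsmul_eq_mul, Finset.cast_card_sdiff h, mul_comm]

lemma box_shift {a : (Fin d → ℤ) → ℝ} {M : ℝ} (ha : ∀ i, |a i| ≤ M) (t : Fin d → ℤ) (m T : ℕ)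
    (ht : ∀ i, |t i| ≤ m) :
    |∑ u ∈ box d T, (a (t + u) - a u)| ≤
      2 * M * ((2 * ((T : ℝ) + m)) ^ d - (2 * (T : ℝ)) ^ d) := by
  classical
  have e : ∑ u ∈ box d T, a (t + u) = ∑ v ∈ (box d T).map (addLeftEmbedding t), a v := by
    rw [Finset.sum_map]; rfl
  have h1 : box d T ⊆ box d (T + m) := by
    intro u hu; rw [mem_box] at hu ⊢; intro i; have := hu i; push_cast; omega
  have h2 : (box d T).map (addLeftEmbedding t) ⊆ box d (T + m) := by
    intro v hv
    obtain ⟨u, hu, rfl⟩ := Finset.mem_map.1 hv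
    rw [mem_box] at hu ⊢
    intro i
    have := hu i
    have := abs_le.1 (ht i)
    simp only [addLeftEmbedding_apply, Pi.add_apply]; push_cast; omega
  have b1 := sum_sub_le h1 a M ha
  have b2 := sum_sub_le h2 a M ha
  rw [Finset.card_map] at b2
  simp only [card_box] at b1 b2
  push_cast at b1 b2
  rw [Finset.sum_sub_distrib, e]
  rw [abs_le] at *
  constructor <;> linarith

lemma bT_tendsto (d m : ℕ) (M : ℝ) : Tendsto (fun T : ℕ => ((2 * T : ℝ) ^ d)⁻¹ *
    (2 * M * ((2 * ((T : ℝ) + m)) ^ d - (2 * (T : ℝ)) ^ d))) atTop (nhds 0) := by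
  have h : Tendsto (fun T : ℕ => 2 * M * ((1 + (m : ℝ) / (T : ℝ)) ^ d - 1)) atTop (nhds 0) := by
    have := (((tendsto_const_div_atTop_nhds_zero_nat (m : ℝ)).const_add 1).pow d).sub_const 1
    have := this.const_mul (2 * M)
    simpa using this
  refine h.congr' ?_
  filter_upwards [eventually_ge_atTop 1] with T hT
  have hT' : (0 : ℝ) < T := by exact_mod_cast hT
  have e : (2 * ((T : ℝ) + m)) ^ d = (2 * (T : ℝ)) ^ d * (1 + (m : ℝ) / T) ^ d := by
    rw [← mul_pow]; congr 1; field_simp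
  rw [e]
  have : (2 * (T : ℝ)) ^ d ≠ 0 := by positivity
  field_simp

lemma condExp_cob (hφ : Act μ φ) {h : S → ℝ} (hh : Integrable h μ) (t : Fin d → ℤ) :
    μ[h ∘ φ t - h|inv φ] =ᵐ[μ] 0 := by
  symm
  have hi : Integrable (h ∘ φ t) μ := (hφ.mp t).integrable_comp_of_integrable hh
  refine ae_eq_condExp_of_forall_setIntegral_eq (inv_le φ) (hi.sub hh) ?_ ?_ ?_
  · intro s _ _; exact (integrable_zero _ _ _).integrableOn
  · intro A hA _
    obtain ⟨hA1, hA2⟩ := (measurableSet_inv φ A).1 hA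
    have h1 : ∫ x in A, (h ∘ φ t - h) x ∂μ = ∫ x in A, (h ∘ φ t) x ∂μ - ∫ x in A, h x ∂μ :=
      integral_sub hi.integrableOn hh.integrableOn
    have h2 : ∫ x in A, (h ∘ φ t) x ∂μ = ∫ x in A, h x ∂μ := by
      rw [← integral_indicator hA1, ← integral_indicator hA1]
      have e : A.indicator (h ∘ φ t) = fun x => (A.indicator h) (φ t x) := by
        ext x
        have : φ t x ∈ A ↔ x ∈ A := by
          conv_rhs => rw [← hA2 t]
          rfl
        by_cases hx : x ∈ A
        · rw [Set.indicator_of_mem hx, Set.indicator_of_mem (this.2 hx)]; rfl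
        · rw [Set.indicator_of_notMem hx, Set.indicator_of_notMem (fun h => hx (this.1 h))]
      rw [e]
      have hm : AEStronglyMeasurable (A.indicator h) (Measure.map (φ t) μ) := by
        rw [(hφ.mp t).map_eq]; exact hh.1.indicator hA1
      rw [← integral_map (hφ.mp t).aemeasurable hm, (hφ.mp t).map_eq]
    rw [h1, h2]; simp
  · exact aestronglyMeasurable_zero

lemma good_cob_bdd (hφ : Act μ φ) {h : S → ℝ} (hh : Integrable h μ) {M : ℝ}
    (hM : ∀ s, |h s| ≤ M) (t : Fin d → ℤ) : Good μ φ (h ∘ φ t - h) := by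
  have hi : Integrable (h ∘ φ t) μ := (hφ.mp t).integrable_comp_of_integrable hh
  obtain ⟨m, hm⟩ : ∃ m : ℕ, ∀ i, |t i| ≤ m := by
    refine ⟨∑ i, (t i).natAbs, fun i => ?_⟩
    rw [Int.abs_eq_natAbs]
    exact_mod_cast Finset.single_le_sum (f := fun i => (t i).natAbs) (fun _ _ => Nat.zero_le _)
      (Finset.mem_univ i)
  have hb : ∀ (T : ℕ) s, |avg φ (h ∘ φ t - h) T s| ≤ ((2 * T : ℝ) ^ d)⁻¹ *
      (2 * M * ((2 * ((T : ℝ) + m)) ^ d - (2 * (T : ℝ)) ^ d)) := by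
    intro T s
    rw [avg, abs_mul, abs_of_nonneg (by positivity : (0:ℝ) ≤ ((2 * T : ℝ) ^ d)⁻¹)]
    refine mul_le_mul_of_nonneg_left ?_ (by positivity)
    have := box_shift (a := fun v => h (φ v s)) (M := M) (fun v => hM _) t m T hm
    simpa [hφ.comp] using this
  have hc := condExp_cob hφ hh t
  refine ⟨hi.sub hh, ?_, ?_⟩
  · filter_upwards [hc] with s hs
    rw [hs]
    exact squeeze_zero_norm (fun T => hb T s) (bT_tendsto d m M)
  · have := (ENNReal.tendsto_ofReal (bT_tendsto d m M))
    rw [ENNReal.ofReal_zero] at this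
    refine tendsto_of_tendsto_of_tendsto_of_le_of_le tendsto_const_nhds this
      (fun _ => zero_le) fun T => ?_
    refine (eLpNorm_le_of_ae_bound (C := ((2 * T : ℝ) ^ d)⁻¹ *
      (2 * M * ((2 * ((T : ℝ) + m)) ^ d - (2 * (T : ℝ)) ^ d))) ?_).trans ?_
    · filter_upwards [hc] with s hs
      rw [Pi.sub_apply, hs, Pi.zero_apply, sub_zero]
      exact hb T s
    · simp

lemma good_cob (hφ : Act μ φ) {h : S → ℝ} (hh : Integrable h μ) (t : Fin d → ℤ) :
    Good μ φ (h ∘ φ t - h) := by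
  have hi : Integrable (h ∘ φ t) μ := (hφ.mp t).integrable_comp_of_integrable hh
  refine good_closed hφ (hi.sub hh) fun ε hε => ?_
  have hε2 : ε / 2 ≠ 0 := (ENNReal.div_pos hε (by norm_num)).ne'
  obtain ⟨g, hg1, hg2⟩ := (memLp_one_iff_integrable.2 hh).exists_simpleFunc_eLpNorm_sub_lt
    ENNReal.one_ne_top hε2
  have hgi := memLp_one_iff_integrable.1 hg2
  obtain ⟨M, hM⟩ := g.exists_forall_norm_le
  refine ⟨_, good_cob_bdd hφ hgi hM t, ?_⟩
  have e : (h ∘ φ t - h) - (⇑g ∘ φ t - ⇑g) = (h - ⇑g) ∘ φ t - (h - ⇑g) := by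
    ext s; simp; ring
  rw [e]
  refine (eLpNorm_sub_le ((hh.sub hgi).1.comp_measurePreserving (hφ.mp t)) (hh.sub hgi).1
    le_rfl).trans ?_
  rw [eLpNorm_comp_measurePreserving (hh.sub hgi).1 (hφ.mp t)]
  exact (add_le_add hg1.le hg1.le).trans (ENNReal.add_halves ε).le

lemma good_invariant (hφ : Act μ φ) {g : S → ℝ} (hg : Integrable g μ)
    (h : ∀ t, g ∘ φ t =ᵐ[μ] g) : Good μ φ g := by
  have havg : ∀ᵐ s ∂μ, ∀ T : ℕ, 1 ≤ T → avg φ g T s = g s := by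
    filter_upwards [ae_all_iff.2 h] with s hs T hT
    simp only [Function.comp_apply] at hs
    have hT' : (0 : ℝ) < T := by exact_mod_cast hT
    simp only [avg, hs, Finset.sum_const, card_box, nsmul_eq_mul]
    push_cast
    rw [← mul_assoc, inv_mul_cancel₀ (by positivity), one_mul]
  have hm : AEStronglyMeasurable[inv φ] g μ := by
    set g0 := hg.1.mk g
    have hg0 : Measurable g0 := hg.1.stronglyMeasurable_mk.measurable
    have hgg : g =ᵐ[μ] g0 := hg.1.ae_eq_mk
    let N : Set S := {s | ∀ t, g0 (φ t s) = g0 s}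
    have hN : ∀ u s, φ u s ∈ N ↔ s ∈ N := by
      have h1 : ∀ u s, s ∈ N → φ u s ∈ N := by
        intro u s hs t
        rw [← hφ.comp, hs, hs]
      intro u s
      refine ⟨fun hs => ?_, h1 u s⟩
      have := h1 (-u) _ hs
      rwa [← hφ.comp, neg_add_cancel, hφ.id] at this
    have hNm : MeasurableSet N := by
      have : N = ⋂ t, {s | g0 (φ t s) = g0 s} := by ext s; simp [N]
      rw [this]
      exact MeasurableSet.iInter fun t =>
        measurableSet_eq_fun (hg0.comp (hφ.mp t).measurable) hg0
    have hNae : ∀ᵐ s ∂μ, s ∈ N := by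
      have : ∀ᵐ s ∂μ, ∀ t, g0 (φ t s) = g0 s := by
        rw [ae_all_iff]
        intro t
        filter_upwards [h t, hgg, (hφ.mp t).quasiMeasurePreserving.ae hgg] with s h1 h2 h3
        rw [← h3, ← h2]; exact h1
      exact this
    refine ⟨N.indicator g0, ?_, ?_⟩
    · refine Measurable.stronglyMeasurable (fun B hB => ?_)
      rw [measurableSet_inv]
      refine ⟨(hg0.indicator hNm) hB, fun t => ?_⟩
      ext s
      have : N.indicator g0 (φ t s) = N.indicator g0 s := by
        by_cases hs : s ∈ N
        · rw [Set.indicator_of_mem hs, Set.indicator_of_mem ((hN t s).2 hs), hs t]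
        · rw [Set.indicator_of_notMem hs, Set.indicator_of_notMem (fun h => hs ((hN t s).1 h))]
      simp only [Set.mem_preimage, this]
    · filter_upwards [hgg, hNae] with s h1 h2
      rw [Set.indicator_of_mem h2, h1]
  have hc := condExp_of_aestronglyMeasurable' (inv_le φ) hm hg
  refine ⟨hg, ?_, ?_⟩
  · filter_upwards [havg, hc] with s h1 h2
    rw [h2]
    refine tendsto_const_nhds.congr' ?_
    filter_upwards [eventually_ge_atTop 1] with T hT using (h1 T hT).symm
  · refine tendsto_const_nhds.congr' ?_
    filter_upwards [eventually_ge_atTop 1] with T hT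
    have : avg φ g T - μ[g|inv φ] =ᵐ[μ] 0 := by
      filter_upwards [havg, hc] with s h1 h2
      simp [h1 T hT, h2]
    rw [eLpNorm_congr_ae this]; simp

lemma int_of_Lp2 (w : Lp ℝ 2 μ) : Integrable w μ :=
  (Lp.memLp w).integrable (by norm_num)

noncomputable def goodSub (hφ : Act μ φ) : Submodule ℝ (Lp ℝ 2 μ) where
  carrier := {w | Good μ φ w}
  add_mem' {a b} ha hb := (Good.add hφ ha hb).congr hφ (Lp.coeFn_add a b)
  zero_mem' := (good_invariant hφ (integrable_zero S ℝ μ) (fun _ => by rfl)).congr hφ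
    (Lp.coeFn_zero ℝ 2 μ)
  smul_mem' c a ha := (Good.smul c ha).congr hφ (Lp.coeFn_smul c a)

lemma goodSub_top (hφ : Act μ φ) : goodSub hφ = ⊤ := by
  have hcl : IsClosed (goodSub hφ : Set (Lp ℝ 2 μ)) := by
    refine isClosed_of_closure_subset fun f hf => ?_
    refine good_closed hφ (int_of_Lp2 f) fun ε hε => ?_
    obtain ⟨g, hg, hfg⟩ := EMetric.mem_closure_iff.1 hf ε (pos_iff_ne_zero.2 hε)
    refine ⟨g, hg, ?_⟩
    rw [Lp.edist_def] at hfg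
    refine (eLpNorm_le_eLpNorm_of_exponent_le (by norm_num) ?_).trans hfg.le
    exact (Lp.aestronglyMeasurable f).sub (Lp.aestronglyMeasurable g)
  have : CompleteSpace (goodSub hφ) := hcl.completeSpace_coe
  rw [← Submodule.orthogonal_eq_bot_iff, Submodule.eq_bot_iff]
  intro g hg
  have hinv : ∀ t, Lp.compMeasurePreserving (φ t) (hφ.mp t) g = g := by
    intro t
    set U := Lp.compMeasurePreserving (φ t) (hφ.mp t) g with hU
    have hmem : U - g ∈ goodSub hφ := by
      refine (good_cob hφ (int_of_Lp2 g) t).congr hφ ?_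
      filter_upwards [Lp.coeFn_sub U g, Lp.coeFn_compMeasurePreserving g (hφ.mp t)] with s h1 h2
      rw [h1, Pi.sub_apply, h2, Pi.sub_apply]
    have h0 : inner ℝ (U - g) g = 0 := (Submodule.mem_orthogonal _ g).1 hg _ hmem
    have hn : ‖U‖ = ‖g‖ := Lp.norm_compMeasurePreserving g (hφ.mp t)
    rw [inner_sub_left, real_inner_self_eq_norm_sq] at h0
    have := norm_sub_sq_real U g
    rw [hn] at this
    have h3 : ‖U - g‖ ^ 2 = 0 := by linarith
    exact sub_eq_zero.1 (norm_eq_zero.1 (pow_eq_zero_iff (by norm_num) |>.1 h3))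
  have hgood : g ∈ goodSub hφ := by
    refine good_invariant hφ (int_of_Lp2 g) fun t => ?_
    have := Lp.coeFn_compMeasurePreserving g (hφ.mp t)
    rw [hinv t] at this
    exact this.symm
  exact inner_self_eq_zero.1 ((Submodule.mem_orthogonal _ g).1 hg _ hgood)

lemma good_all (hφ : Act μ φ) {f : S → ℝ} (hf : Integrable f μ) : Good μ φ f := by
  refine good_closed hφ hf fun ε hε => ?_
  obtain ⟨g, hg1, hg2⟩ := (memLp_one_iff_integrable.2 hf).exists_simpleFunc_eLpNorm_sub_lt
    ENNReal.one_ne_top hε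
  refine ⟨g, ?_, hg1.le⟩
  have hg : MemLp g 2 μ := g.memLp_of_isFiniteMeasure 2 μ
  have : hg.toLp g ∈ goodSub hφ := by rw [goodSub_top]; trivial
  exact Good.congr hφ this hg.coeFn_toLp.symm

end

end ZdErg

/-- Multiparameter Birkhoff theorem, discrete case: for a measure-preserving
`ℤ^d`-action `{φ_t}` on a probability space `(S,μ)` and `f₀ ∈ L¹(μ)`, the averages
`A_T f = (2T)^{-d} Σ_{t ∈ (−T,T]^d ∩ ℤ^d} f₀ ∘ φ_t` converge `μ`-a.e. and in `L¹` to the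
conditional expectation of `f₀` given the σ-algebra `𝓘` of invariant measurable sets. -/
theorem stmt8 {S : Type*} [MeasurableSpace S]
    (μ : Measure S) [IsProbabilityMeasure μ] (d : ℕ)
    (φ : (Fin d → ℤ) → S → S)
    (hφmeas : ∀ t, Measurable (φ t))
    (hid : ∀ s, φ 0 s = s)
    (hcomp : ∀ u v s, φ (u + v) s = φ u (φ v s))
    (hpres : ∀ t, ∀ A : Set S, MeasurableSet A → μ (φ t ⁻¹' A) = μ A) :
    ∀ f₀ : S → ℝ, Integrable f₀ μ →
      (∀ᵐ s ∂μ, Tendsto (fun T : ℕ =>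
          ((2 * T : ℝ) ^ d)⁻¹ *
            ∑ t ∈ Fintype.piFinset fun _ : Fin d => Finset.Ioc (-(T : ℤ)) (T : ℤ),
              f₀ (φ t s))
        atTop
        (nhds ((μ[f₀|MeasurableSpace.generateFrom
          {A : Set S | MeasurableSet A ∧ ∀ t, φ t ⁻¹' A = A}]) s))) ∧
      Tendsto (fun T : ℕ =>
          ∫ s, |(((2 * T : ℝ) ^ d)⁻¹ *
            ∑ t ∈ Fintype.piFinset fun _ : Fin d => Finset.Ioc (-(T : ℤ)) (T : ℤ),
              f₀ (φ t s)) -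
            (μ[f₀|MeasurableSpace.generateFrom
              {A : Set S | MeasurableSet A ∧ ∀ t, φ t ⁻¹' A = A}]) s| ∂μ)
        atTop (nhds 0) := by
  intro f₀ hf₀
  have hφ : ZdErg.Act μ φ := ⟨hid, hcomp, fun t => ⟨hφmeas t, by
    ext A hA
    rw [Measure.map_apply (hφmeas t) hA, hpres t A hA]⟩⟩
  have hG := ZdErg.good_all hφ hf₀
  refine ⟨hG.ae, ?_⟩
  have h := (ENNReal.tendsto_toReal ENNReal.zero_ne_top).comp hG.l1
  rw [ENNReal.toReal_zero] at h
  refine h.congr fun T => ?_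
  rw [Function.comp_apply, eLpNorm_one_eq_lintegral_enorm]
  symm
  have hm : AEStronglyMeasurable (ZdErg.avg φ f₀ T - μ[f₀|ZdErg.inv φ]) μ :=
    (ZdErg.avg_aesm hφ hf₀.1 T).sub integrable_condExp.1
  exact integral_norm_eq_lintegral_enorm hm
end
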